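/- arXiv:2001.06185 — 6 statements merged into one kernel-verified Lean document; each statement's English description precedes it below -/
import Mathlib

section
/- Let ℰ, 𝒜 ∈ ℝ^{N×N} with ℰ invertible and the pencil λℰ − 𝒜 c-stable, let ℬ ∈ ℝ^{N×m}, and let Ω = [−ω₂, −ω₁] ∪ [ω₁, ω₂] with 0 ≤ ω₁ < ω₂ < ∞. Define F_Ω = (1/2π) ∫_Ω (iωℰ − 𝒜)^{-1} dω and P_Ω = (1/2π) ∫_Ω (iωℰ − 𝒜)^{-1} ℬ ℬᵀ (−iωℰ − 𝒜)^{-ᵀ} dω. Then F_Ω is a real matrix, P_Ω is a real symmetric positive semidefinite matrix, and P_Ω satisfies the frequency-limited Lyapunov equation 𝒜 P_Ω ℰᵀ + ℰ P_Ω 𝒜ᵀ + ℬ_Ω ℬᵀ + ℬ ℬ_Ωᵀ = 0, where ℬ_Ω = ℰ F_Ω ℬ. -/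
open Matrix MeasureTheory

noncomputable section

/-- A matrix pencil `λℰ − 𝒜` (with real square matrices) is c-stable if all complex `λ`
with `det (λℰ − 𝒜) = 0` lie in the open left complex half-plane. -/
def CStablePencil {N : ℕ} (ℰ 𝒜 : Matrix (Fin N) (Fin N) ℝ) : Prop :=
  ∀ μ : ℂ, (μ • ℰ.map Complex.ofReal - 𝒜.map Complex.ofReal).det = 0 → μ.re < 0

/-- Complexification of a real matrix. -/
def toC {a b : ℕ} (M : Matrix (Fin a) (Fin b) ℝ) : Matrix (Fin a) (Fin b) ℂ :=
  M.map Complex.ofReal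

/-- The resolvent `(iωℰ − 𝒜)⁻¹` of a real matrix pencil on the imaginary axis. -/
def axisResolvent {N : ℕ} (ℰ 𝒜 : Matrix (Fin N) (Fin N) ℝ) (ω : ℝ) :
    Matrix (Fin N) (Fin N) ℂ :=
  ((Complex.I * (ω : ℂ)) • toC ℰ - toC 𝒜)⁻¹

/-- The entrywise integral of a matrix-valued function. -/
def entryIntegral {m n α : Type*} [MeasurableSpace α] (μ : Measure α)
    (f : α → Matrix m n ℂ) : Matrix m n ℂ :=
  Matrix.of fun i j => ∫ x, f x i j ∂μ

section EntryIntegral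

variable {k m n α : Type*} [MeasurableSpace α] {μ : Measure α}

theorem entryIntegral_add {f g : α → Matrix m n ℂ}
    (hf : ∀ i j, Integrable (fun x => f x i j) μ) (hg : ∀ i j, Integrable (fun x => g x i j) μ) :
    entryIntegral μ (fun x => f x + g x) = entryIntegral μ f + entryIntegral μ g := by
  ext i j
  simpa [entryIntegral] using integral_add (hf i j) (hg i j)

theorem entryIntegral_neg (f : α → Matrix m n ℂ) :
    entryIntegral μ (fun x => -f x) = -entryIntegral μ f := by
  ext i j
  simp [entryIntegral, integral_neg]

theorem entryIntegral_transpose (f : α → Matrix m n ℂ) :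
    entryIntegral μ (fun x => (f x)ᵀ) = (entryIntegral μ f)ᵀ := rfl

theorem entryIntegral_conjTranspose (f : α → Matrix m n ℂ) :
    entryIntegral μ (fun x => (f x)ᴴ) = (entryIntegral μ f)ᴴ := by
  ext i j
  simpa [entryIntegral] using integral_conj (μ := μ) (f := fun x => f x j i)

theorem entryIntegral_const_mul [Fintype m] (C : Matrix k m ℂ) {f : α → Matrix m n ℂ}
    (hf : ∀ i j, Integrable (fun x => f x i j) μ) :
    entryIntegral μ (fun x => C * f x) = C * entryIntegral μ f := by
  ext i j
  simp only [entryIntegral, Matrix.of_apply, Matrix.mul_apply]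
  rw [integral_finsetSum _ fun a _ => (hf a j).const_mul _]
  simp only [integral_const_mul]

theorem entryIntegral_mul_const [Fintype n] {f : α → Matrix m n ℂ} (C : Matrix n k ℂ)
    (hf : ∀ i j, Integrable (fun x => f x i j) μ) :
    entryIntegral μ (fun x => f x * C) = entryIntegral μ f * C := by
  ext i j
  simp only [entryIntegral, Matrix.of_apply, Matrix.mul_apply]
  rw [integral_finsetSum _ fun a _ => (hf i a).mul_const _]
  simp only [integral_mul_const]

open scoped ComplexOrder in
theorem entryIntegral_posSemidef [Fintype n] {f : α → Matrix n n ℂ}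
    (hf : ∀ i j, Integrable (fun x => f x i j) μ) (hpos : ∀ x, (f x).PosSemidef) :
    (entryIntegral μ f).PosSemidef := by
  refine .of_dotProduct_mulVec_nonneg ?_ fun v => ?_
  · rw [Matrix.IsHermitian, ← entryIntegral_conjTranspose]
    simp only [fun x => (hpos x).isHermitian.eq]
  · have h : star v ⬝ᵥ (entryIntegral μ f *ᵥ v) = ∫ x, star v ⬝ᵥ (f x *ᵥ v) ∂μ := by
      simp only [dotProduct, mulVec, entryIntegral, Matrix.of_apply, Finset.mul_sum]
      rw [integral_finsetSum _ fun i _ => integrable_finsetSum _ fun j _ =>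
        ((hf i j).mul_const _).const_mul _]
      refine Finset.sum_congr rfl fun i _ => ?_
      rw [integral_finsetSum _ fun j _ => ((hf i j).mul_const _).const_mul _]
      simp only [integral_const_mul, integral_mul_const]
    rw [h]
    exact integral_nonneg fun x => (hpos x).dotProduct_mulVec_nonneg v

end EntryIntegral

open scoped ComplexOrder in
theorem posSemidef_map_re {n : Type*} [Fintype n] {M : Matrix n n ℂ} (hM : M.PosSemidef) :
    (Matrix.of fun i j => (M i j).re : Matrix n n ℝ).PosSemidef := by
  refine .of_dotProduct_mulVec_nonneg ?_ fun v => ?_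
  · ext i j
    have := congrArg Complex.re (hM.isHermitian.apply i j)
    simpa using this
  · have h := (Complex.le_def.mp (hM.dotProduct_mulVec_nonneg fun i => (v i : ℂ))).1
    simpa [dotProduct, mulVec, Complex.mul_re] using h

/-- The frequency range `[−b, −a] ∪ [a, b]` is invariant under reflection. -/
theorem setIntegral_comp_neg_symmetric_union (a b : ℝ) (f : ℝ → ℂ) :
    ∫ ω in Set.Icc (-b) (-a) ∪ Set.Icc a b, f (-ω) =
      ∫ ω in Set.Icc (-b) (-a) ∪ Set.Icc a b, f ω := by
  have h := (Measure.measurePreserving_neg (volume : Measure ℝ)).setIntegral_preimage_emb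
    (Homeomorph.neg ℝ).measurableEmbedding f (Set.Icc (-b) (-a) ∪ Set.Icc a b)
  have hs : (Neg.neg ⁻¹' (Set.Icc (-b) (-a) ∪ Set.Icc a b) : Set ℝ) =
      Set.Icc (-b) (-a) ∪ Set.Icc a b := by
    simp [Set.preimage_union, Set.union_comm]
  rwa [hs] at h

theorem conjTranspose_toC {a b : ℕ} (M : Matrix (Fin a) (Fin b) ℝ) : (toC M)ᴴ = (toC M)ᵀ := by
  ext i j
  simp [toC]

section Resolvent

variable {N : ℕ} {ℰ 𝒜 : Matrix (Fin N) (Fin N) ℝ}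

theorem CStablePencil.det_axis_ne_zero (hstab : CStablePencil ℰ 𝒜) (ω : ℝ) :
    ((Complex.I * (ω : ℂ)) • toC ℰ - toC 𝒜).det ≠ 0 := by
  intro h
  simpa using hstab _ h

theorem conjTranspose_axisResolvent (ω : ℝ) :
    (axisResolvent ℰ 𝒜 ω)ᴴ = (axisResolvent ℰ 𝒜 (-ω))ᵀ := by
  simp [axisResolvent, conjTranspose_nonsing_inv, transpose_nonsing_inv, conjTranspose_toC]

theorem CStablePencil.continuous_axisResolvent (hstab : CStablePencil ℰ 𝒜) :
    Continuous (axisResolvent ℰ 𝒜) := by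
  have hc : Continuous fun ω : ℝ => (Complex.I * (ω : ℂ)) • toC ℰ - toC 𝒜 := by fun_prop
  have hinv : axisResolvent ℰ 𝒜 = fun ω : ℝ => ((Complex.I * (ω : ℂ)) • toC ℰ - toC 𝒜).det⁻¹ •
      ((Complex.I * (ω : ℂ)) • toC ℰ - toC 𝒜).adjugate := by
    ext1 ω
    rw [axisResolvent, Matrix.inv_def, Ring.inverse_eq_inv']
  rw [hinv]
  exact (hc.matrix_det.inv₀ hstab.det_axis_ne_zero).smul hc.matrix_adjugate

theorem CStablePencil.mul_axisResolvent (hstab : CStablePencil ℰ 𝒜) (ω : ℝ) :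
    toC 𝒜 * axisResolvent ℰ 𝒜 ω =
      (Complex.I * (ω : ℂ)) • (toC ℰ * axisResolvent ℰ 𝒜 ω) - 1 := by
  have h := Matrix.mul_nonsing_inv _ (isUnit_iff_ne_zero.mpr (hstab.det_axis_ne_zero ω))
  rw [← axisResolvent, Matrix.sub_mul, Matrix.smul_mul] at h
  rw [← h]
  abel

/-- The pointwise Lyapunov identity for the integrand of the Gramian. -/
theorem CStablePencil.lyapunov_integrand (hstab : CStablePencil ℰ 𝒜)
    (Q : Matrix (Fin N) (Fin N) ℂ) (ω : ℝ) :
    toC 𝒜 * (axisResolvent ℰ 𝒜 ω * Q * (axisResolvent ℰ 𝒜 (-ω))ᵀ) * (toC ℰ)ᵀ +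
        toC ℰ * (axisResolvent ℰ 𝒜 ω * Q * (axisResolvent ℰ 𝒜 (-ω))ᵀ) * (toC 𝒜)ᵀ =
      -(toC ℰ * axisResolvent ℰ 𝒜 ω * Q + Q * (toC ℰ * axisResolvent ℰ 𝒜 (-ω))ᵀ) := by
  have h₁ := hstab.mul_axisResolvent ω
  have h₂ := congrArg transpose (hstab.mul_axisResolvent (-ω))
  rw [transpose_mul] at h₂
  calc
    _ = toC 𝒜 * axisResolvent ℰ 𝒜 ω * Q * (toC ℰ * axisResolvent ℰ 𝒜 (-ω))ᵀ +
        toC ℰ * axisResolvent ℰ 𝒜 ω * Q * ((axisResolvent ℰ 𝒜 (-ω))ᵀ * (toC 𝒜)ᵀ) := by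
      simp only [transpose_mul, Matrix.mul_assoc]
    _ = _ := by
      rw [h₁, h₂]
      simp [Matrix.sub_mul, Matrix.mul_sub]
      abel

end Resolvent

/-- For a c-stable pencil with invertible `ℰ` and the symmetric frequency range
`Ω = [−ω₂, −ω₁] ∪ [ω₁, ω₂]`, the matrix `F_Ω = (1/2π) ∫_Ω (iωℰ − 𝒜)⁻¹ dω` is real, the
frequency-limited controllability Gramian
`P_Ω = (1/2π) ∫_Ω (iωℰ − 𝒜)⁻¹ ℬ ℬᵀ (−iωℰ − 𝒜)⁻ᵀ dω` is real symmetric positive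
semidefinite, and `P_Ω` satisfies the frequency-limited Lyapunov equation
`𝒜 P_Ω ℰᵀ + ℰ P_Ω 𝒜ᵀ + ℬ_Ω ℬᵀ + ℬ ℬ_Ωᵀ = 0` with `ℬ_Ω = ℰ F_Ω ℬ`. -/
theorem frequency_limited_controllability_gramian {N m : ℕ}
    (ℰ 𝒜 : Matrix (Fin N) (Fin N) ℝ) (ℬ : Matrix (Fin N) (Fin m) ℝ)
    (hE : IsUnit ℰ) (hstab : CStablePencil ℰ 𝒜)
    (ω₁ ω₂ : ℝ) (hω₁ : 0 ≤ ω₁) (hω₁₂ : ω₁ < ω₂)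
    (FΩ PΩ : Matrix (Fin N) (Fin N) ℂ)
    (hF : FΩ = Matrix.of fun i j =>
      ((1 / (2 * Real.pi) : ℝ) : ℂ) *
        ∫ ω in Set.Icc (-ω₂) (-ω₁) ∪ Set.Icc ω₁ ω₂,
          ((((Complex.I * (ω : ℂ)) • toC ℰ - toC 𝒜)⁻¹) i j))
    (hP : PΩ = Matrix.of fun i j =>
      ((1 / (2 * Real.pi) : ℝ) : ℂ) *
        ∫ ω in Set.Icc (-ω₂) (-ω₁) ∪ Set.Icc ω₁ ω₂,
          ((((Complex.I * (ω : ℂ)) • toC ℰ - toC 𝒜)⁻¹ * toC ℬ * (toC ℬ)ᵀ *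
            (((-(Complex.I * (ω : ℂ))) • toC ℰ - toC 𝒜)⁻¹)ᵀ) i j)) :
    (∀ i j, (FΩ i j).im = 0) ∧
    (∀ i j, (PΩ i j).im = 0) ∧
    (Matrix.of fun i j => (PΩ i j).re : Matrix (Fin N) (Fin N) ℝ).PosSemidef ∧
    toC 𝒜 * PΩ * (toC ℰ)ᵀ + toC ℰ * PΩ * (toC 𝒜)ᵀ +
      (toC ℰ * FΩ * toC ℬ) * (toC ℬ)ᵀ + toC ℬ * (toC ℰ * FΩ * toC ℬ)ᵀ = 0 := by
  set S := Set.Icc (-ω₂) (-ω₁) ∪ Set.Icc ω₁ ω₂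
  set c : ℂ := ((1 / (2 * Real.pi) : ℝ) : ℂ) with hc
  have hc0 : 0 ≤ 1 / (2 * Real.pi) := by positivity
  set R := axisResolvent ℰ 𝒜 with hR
  set Q := toC ℬ * (toC ℬ)ᵀ with hQ
  set G : ℝ → Matrix (Fin N) (Fin N) ℂ := fun ω => R ω * Q * (R (-ω))ᵀ with hG
  have hRcont : Continuous R := hstab.continuous_axisResolvent
  have hRneg : Continuous fun ω => R (-ω) := hRcont.comp continuous_neg
  have hGcont : Continuous G :=
    (hRcont.matrix_mul continuous_const).matrix_mul hRneg.matrix_transpose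
  have hint {f : ℝ → Matrix (Fin N) (Fin N) ℂ} (hf : Continuous f) (i j : Fin N) :
      Integrable (fun ω => f ω i j) (volume.restrict S) :=
    (hf.matrix_elem i j).continuousOn.integrableOn_compact (isCompact_Icc.union isCompact_Icc)
  have hneg (f : ℝ → Matrix (Fin N) (Fin N) ℂ) :
      entryIntegral (volume.restrict S) (fun ω => f (-ω)) =
        entryIntegral (volume.restrict S) f := by
    ext i j
    exact setIntegral_comp_neg_symmetric_union ω₁ ω₂ fun ω => f ω i j
  have hreal {f : ℝ → Matrix (Fin N) (Fin N) ℂ} (hf : ∀ ω, (f ω)ᴴ = (f (-ω))ᵀ) (i j : Fin N) :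
      ((c • entryIntegral (volume.restrict S) f) i j).im = 0 := by
    have h : (entryIntegral (volume.restrict S) f)ᴴ =
        (entryIntegral (volume.restrict S) f)ᵀ := by
      rw [← entryIntegral_conjTranspose, ← entryIntegral_transpose]
      simp only [hf]
      exact hneg fun ω => (f ω)ᵀ
    have h' := congrFun (congrFun h j) i
    rw [conjTranspose_apply, transpose_apply] at h'
    have him := Complex.conj_eq_iff_im.mp h'
    simp [hc, -one_div, -Complex.ofReal_div, -Complex.ofReal_mul, him]
  have hFR : FΩ = c • entryIntegral (volume.restrict S) R := by
    rw [hF]; rfl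
  have hPG : PΩ = c • entryIntegral (volume.restrict S) G := by
    rw [hP]
    ext i j
    simp [entryIntegral, hG, hQ, hR, axisResolvent, Matrix.mul_assoc]
  have hGfactor (ω : ℝ) : G ω = (R ω * toC ℬ) * (R ω * toC ℬ)ᴴ := by
    simp only [hG, hQ, conjTranspose_mul, hR, conjTranspose_axisResolvent, conjTranspose_toC,
      Matrix.mul_assoc]
  have hGconj (ω : ℝ) : (G ω)ᴴ = (G (-ω))ᵀ := by
    have hRR : ((R (-ω))ᵀ)ᴴ = R ω := by
      rw [hR, ← conjTranspose_axisResolvent, conjTranspose_conjTranspose]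
    have hBB : ((toC ℬ)ᵀ)ᴴ = toC ℬ := by
      rw [← conjTranspose_toC, conjTranspose_conjTranspose]
    simp only [hG, hQ, conjTranspose_mul, transpose_mul, hRR, hBB, conjTranspose_toC,
      transpose_transpose, neg_neg]
    rw [hR, conjTranspose_axisResolvent]
  refine ⟨hFR ▸ hreal fun ω => conjTranspose_axisResolvent ω, hPG ▸ hreal hGconj, ?_, ?_⟩
  · open scoped ComplexOrder in
    rw [hPG]
    refine posSemidef_map_re ((entryIntegral_posSemidef (hint hGcont) fun ω => ?_).smul ?_)
    · rw [hGfactor]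
      exact posSemidef_self_mul_conjTranspose _
    · exact Complex.zero_le_real.mpr hc0
  · have hlyap : toC 𝒜 * entryIntegral (volume.restrict S) G * (toC ℰ)ᵀ +
        toC ℰ * entryIntegral (volume.restrict S) G * (toC 𝒜)ᵀ =
        -(toC ℰ * entryIntegral (volume.restrict S) R * Q +
          Q * (toC ℰ * entryIntegral (volume.restrict S) R)ᵀ) := by
      have hmul (C : Matrix (Fin N) (Fin N) ℂ) {f : ℝ → Matrix (Fin N) (Fin N) ℂ}
          (hf : Continuous f) : Continuous fun ω => C * f ω := continuous_const.matrix_mul hf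
      have hmul' (C : Matrix (Fin N) (Fin N) ℂ) {f : ℝ → Matrix (Fin N) (Fin N) ℂ}
          (hf : Continuous f) : Continuous fun ω => f ω * C := hf.matrix_mul continuous_const
      have h := congrArg (entryIntegral (volume.restrict S))
        (funext (hstab.lyapunov_integrand Q))
      change entryIntegral _ (fun ω => toC 𝒜 * G ω * (toC ℰ)ᵀ + toC ℰ * G ω * (toC 𝒜)ᵀ) =
        entryIntegral _ (fun ω => -(toC ℰ * R ω * Q + Q * (toC ℰ * R (-ω))ᵀ)) at h
      rw [entryIntegral_neg,
        entryIntegral_add (hint (hmul' _ (hmul _ hGcont))) (hint (hmul' _ (hmul _ hGcont))),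
        entryIntegral_add (hint (hmul' _ (hmul _ hRcont)))
          (hint (hmul _ (hmul _ hRneg).matrix_transpose)),
        entryIntegral_mul_const _ (hint (hmul _ hGcont)),
        entryIntegral_mul_const _ (hint (hmul _ hGcont)),
        entryIntegral_mul_const _ (hint (hmul _ hRcont)),
        entryIntegral_const_mul _ (hint hGcont), entryIntegral_const_mul _ (hint hGcont),
        entryIntegral_const_mul _ (hint hRcont),
        entryIntegral_const_mul _ (hint (hmul _ hRneg).matrix_transpose),
        entryIntegral_transpose, entryIntegral_const_mul _ (hint hRneg), hneg R] at h
      exact h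
    have hsum := congrArg (c • ·) hlyap
    simp only [smul_add, smul_neg] at hsum
    rw [hPG, hFR]
    simp only [Matrix.mul_smul, Matrix.smul_mul, transpose_smul, hsum]
    simp only [transpose_mul, hQ, Matrix.mul_assoc]
    abel
end
end

section
/- Let M, E, K ∈ ℝ^{n×n} be symmetric positive definite and let 0 < γ < λ_min(E(M + (1/4)E K^{-1} E)^{-1}). Then the matrix ℰ = [[K, γM], [γM, M]] is symmetric positive definite, and for 𝒜 = [[−γK, K − γE], [−K, −E + γM]] the matrix 𝒜 + 𝒜ᵀ = [[−2γK, −γE], [−γE, −2E + 2γM]] is symmetric negative definite. -/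
open Matrix

noncomputable section

namespace Matrix

variable {m n : Type*} [Fintype m] [Fintype n] [DecidableEq m] [DecidableEq n]

/-- A symmetric block matrix is positive definite if its upper left block and the corresponding
Schur complement are. -/
theorem PosDef.fromBlocks_of_schur₁₁ {A : Matrix m m ℝ} {B : Matrix m n ℝ} {D : Matrix n n ℝ}
    (hA : A.PosDef) (hS : (D - Bᴴ * A⁻¹ * B).PosDef) : (fromBlocks A B Bᴴ D).PosDef := by
  let _ : Invertible A := hA.isUnit.invertible
  rw [((PosDef.fromBlocks₁₁ B D hA).2 hS.posSemidef).posDef_iff_det_ne_zero, det_fromBlocks₁₁,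
    invOf_eq_nonsing_inv]
  exact mul_ne_zero hA.det_pos.ne' hS.det_pos.ne'

/-- A symmetric block matrix is positive definite if its lower right block and the corresponding
Schur complement are. -/
theorem PosDef.fromBlocks_of_schur₂₂ {A : Matrix m m ℝ} {B : Matrix m n ℝ} {D : Matrix n n ℝ}
    (hD : D.PosDef) (hS : (A - B * D⁻¹ * Bᴴ).PosDef) : (fromBlocks A B Bᴴ D).PosDef := by
  let _ : Invertible D := hD.isUnit.invertible
  rw [((PosDef.fromBlocks₂₂ A B hD).2 hS.posSemidef).posDef_iff_det_ne_zero, det_fromBlocks₂₂,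
    invOf_eq_nonsing_inv]
  exact mul_ne_zero hD.det_pos.ne' hS.det_pos.ne'

open scoped MatrixOrder in
/-- If `S` is positive definite, `E` is symmetric and `γ` lies below every real eigenvalue of
`E * S⁻¹`, then `E - γ • S` is positive definite. -/
theorem PosDef.sub_smul_of_lt_eigenvalues {S E : Matrix n n ℝ} (hS : S.PosDef)
    (hE : E.IsHermitian) {γ : ℝ}
    (hγ : ∀ μ : ℝ, (E * S⁻¹ - μ • (1 : Matrix n n ℝ)).det = 0 → γ < μ) :
    (E - γ • S).PosDef := by
  obtain ⟨y, hy⟩ := CStarAlgebra.nonneg_iff_eq_star_mul_self.mp hS.posSemidef.nonneg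
  have hyu : IsUnit y := by
    have h := hS.isUnit
    rw [hy] at h
    rw [isUnit_iff_isUnit_det] at h ⊢
    rw [det_mul] at h
    exact isUnit_of_mul_isUnit_right h
  have hyi : IsUnit y⁻¹ := (isUnit_nonsing_inv_iff).2 hyu
  have hyd : IsUnit y.det := (isUnit_iff_isUnit_det _).1 hyu
  have hone : star y⁻¹ * S * y⁻¹ = 1 := by
    rw [hy, ← mul_assoc, ← star_mul, mul_nonsing_inv _ hyd, star_one, one_mul,
      mul_nonsing_inv _ hyd]
  rw [← IsUnit.posDef_star_left_conjugate_iff hyi]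
  have hT : (star y⁻¹ * (E - γ • S) * y⁻¹).IsHermitian :=
    isHermitian_conjTranspose_mul_mul _ (hE.sub (hS.isHermitian.smul (.all γ)))
  rw [hT.posDef_iff_eigenvalues_pos]
  intro i
  have hspec := hT.eigenvalues_mem_spectrum_real i
  generalize hT.eigenvalues i = l at hspec
  have hsing : ¬ IsUnit (E - (γ + l) • S) := by
    intro hu
    refine spectrum.mem_iff.1 hspec ?_
    have hEq : algebraMap ℝ (Matrix n n ℝ) l - star y⁻¹ * (E - γ • S) * y⁻¹ =
        -(star y⁻¹ * (E - (γ + l) • S) * y⁻¹) := by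
      have hl : algebraMap ℝ (Matrix n n ℝ) l = l • (star y⁻¹ * S * y⁻¹) := by
        rw [hone, Algebra.algebraMap_eq_smul_one]
      rw [hl]
      simp only [mul_sub, sub_mul, add_smul, mul_add, add_mul, mul_smul_comm, smul_mul_assoc]
      abel
    rw [hEq]
    exact ((hyi.star.mul hu).mul hyi).neg
  have hdet : (E - (γ + l) • S).det = 0 := by
    simpa [isUnit_iff_isUnit_det] using hsing
  have h := hγ (γ + l) <| by
    have hfac : E * S⁻¹ - (γ + l) • (1 : Matrix n n ℝ) = (E - (γ + l) • S) * S⁻¹ := by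
      rw [sub_mul, smul_mul_assoc, mul_nonsing_inv _ ((isUnit_iff_isUnit_det _).1 hS.isUnit)]
    rw [hfac, det_mul, hdet, zero_mul]
  linarith

end Matrix

/-- For symmetric positive definite `M, E, K` and
`0 < γ < λ_min(E(M + (1/4)E K⁻¹ E)⁻¹)` (all eigenvalues of that product are real and
positive; the hypothesis below states that `γ` is below the real part of every
eigenvalue), the strictly dissipative realization matrices satisfy:
`ℰ = [[K, γM], [γM, M]]` is symmetric positive definite and, for
`𝒜 = [[−γK, K − γE], [−K, −E + γM]]`, the matrix
`𝒜 + 𝒜ᵀ = [[−2γK, −γE], [−γE, −2E + 2γM]]` is symmetric negative definite. -/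
theorem strictly_dissipative_realization {n : ℕ}
    (M E K : Matrix (Fin n) (Fin n) ℝ)
    (hM : M.PosDef) (hE : E.PosDef) (hK : K.PosDef)
    (γ : ℝ) (hγ0 : 0 < γ)
    (hγ : ∀ μ : ℂ,
      ((E * (M + (1 / 4 : ℝ) • (E * K⁻¹ * E))⁻¹).map Complex.ofReal -
          μ • (1 : Matrix (Fin n) (Fin n) ℂ)).det = 0 → γ < μ.re)
    (ℰ 𝒜 : Matrix (Fin n ⊕ Fin n) (Fin n ⊕ Fin n) ℝ)
    (hℰ : ℰ = Matrix.fromBlocks K (γ • M) (γ • M) M)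
    (h𝒜 : 𝒜 = Matrix.fromBlocks (-(γ • K)) (K - γ • E) (-K) (-E + γ • M)) :
    ℰ.PosDef ∧
    𝒜 + 𝒜ᵀ =
      Matrix.fromBlocks (-((2 * γ) • K)) (-(γ • E)) (-(γ • E)) (-(2 : ℝ) • E + (2 * γ) • M) ∧
    (-(𝒜 + 𝒜ᵀ)).PosDef := by
  have hKd : IsUnit K.det := (isUnit_iff_isUnit_det _).1 hK.isUnit
  have hMd : IsUnit M.det := (isUnit_iff_isUnit_det _).1 hM.isUnit
  have hEKE : (E * K⁻¹ * E).PosSemidef := by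
    simpa only [hE.isHermitian.eq] using hK.inv.posSemidef.conjTranspose_mul_mul_same E
  have hS : (M + (1 / 4 : ℝ) • (E * K⁻¹ * E)).PosDef :=
    hM.add_posSemidef (hEKE.smul (by norm_num))
  have hgap : (E - γ • (M + (1 / 4 : ℝ) • (E * K⁻¹ * E))).PosDef := by
    refine hS.sub_smul_of_lt_eigenvalues hE.isHermitian fun μ hμ ↦ ?_
    have h := hγ μ ?_
    · simpa using h
    · have hmap : (E * (M + (1 / 4 : ℝ) • (E * K⁻¹ * E))⁻¹).map Complex.ofReal -
          (μ : ℂ) • (1 : Matrix (Fin n) (Fin n) ℂ) =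
          Complex.ofRealHom.mapMatrix
            (E * (M + (1 / 4 : ℝ) • (E * K⁻¹ * E))⁻¹ - μ • (1 : Matrix (Fin n) (Fin n) ℝ)) := by
        ext i j
        simp [Matrix.one_apply, apply_ite Complex.ofReal]
      rw [hmap, ← RingHom.map_det, hμ, map_zero]
  have hsum : 𝒜 + 𝒜ᵀ = Matrix.fromBlocks (-((2 * γ) • K)) (-(γ • E)) (-(γ • E))
      (-(2 : ℝ) • E + (2 * γ) • M) := by
    have hMt : Mᵀ = M := hM.isHermitian
    have hEt : Eᵀ = E := hE.isHermitian
    have hKt : Kᵀ = K := hK.isHermitian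
    rw [h𝒜, fromBlocks_transpose, fromBlocks_add]
    simp only [transpose_neg, transpose_sub, transpose_add, transpose_smul, hMt, hEt, hKt]
    congr 1 <;> module
  refine ⟨?_, hsum, ?_⟩
  · have hsq : (K - (γ / 2) • E) * K⁻¹ * (K - (γ / 2) • E) =
        K - γ • E + (γ ^ 2 / 4) • (E * K⁻¹ * E) := by
      simp only [sub_mul, mul_sub, smul_mul_assoc, mul_smul_comm, mul_nonsing_inv _ hKd, one_mul,
        nonsing_inv_mul_cancel_right _ _ hKd]
      module
    have hpsd : (K - γ • E + (γ ^ 2 / 4) • (E * K⁻¹ * E)).PosSemidef := by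
      have hh : (K - (γ / 2) • E).IsHermitian :=
        hK.isHermitian.sub (hE.isHermitian.smul (.all _))
      rw [← hsq]
      simpa only [hh.eq] using
        hK.inv.posSemidef.conjTranspose_mul_mul_same (K - (γ / 2) • E)
    have hschur : (K - (γ • M) * M⁻¹ * (γ • M)ᴴ).PosDef := by
      have hEq : K - (γ • M) * M⁻¹ * (γ • M)ᴴ =
          γ • (E - γ • (M + (1 / 4 : ℝ) • (E * K⁻¹ * E))) +
            (K - γ • E + (γ ^ 2 / 4) • (E * K⁻¹ * E)) := by
        rw [conjTranspose_smul, hM.isHermitian.eq, star_trivial, smul_mul_assoc,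
          mul_nonsing_inv _ hMd, smul_mul_assoc, one_mul]
        module
      rw [hEq]
      exact (hgap.smul hγ0).add_posSemidef hpsd
    have h := hM.fromBlocks_of_schur₂₂ hschur
    rwa [conjTranspose_smul, hM.isHermitian.eq, star_trivial, ← hℰ] at h
  · have hschur : ((2 : ℝ) • E - (2 * γ) • M -
        (γ • E)ᴴ * ((2 * γ) • K)⁻¹ * (γ • E)).PosDef := by
      have hinv : ((2 * γ) • K)⁻¹ = (2 * γ)⁻¹ • K⁻¹ := by
        refine inv_eq_right_inv ?_
        rw [smul_mul_smul_comm, mul_nonsing_inv _ hKd, mul_inv_cancel₀ (by positivity), one_smul]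
      have hEq : (2 : ℝ) • E - (2 * γ) • M - (γ • E)ᴴ * ((2 * γ) • K)⁻¹ * (γ • E) =
          (2 : ℝ) • (E - γ • (M + (1 / 4 : ℝ) • (E * K⁻¹ * E))) := by
        rw [hinv, conjTranspose_smul, hE.isHermitian.eq, star_trivial]
        simp only [smul_mul_assoc, mul_smul_comm]
        match_scalars <;> field_simp <;> norm_num
      rw [hEq]
      exact hgap.smul (by norm_num)
    have h := (hK.smul (show 0 < 2 * γ by positivity)).fromBlocks_of_schur₁₁ hschur
    rw [conjTranspose_smul, hE.isHermitian.eq, star_trivial] at h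
    rw [hsum, fromBlocks_neg]
    convert h using 2 <;> module
end
end

section
/- Let ℰ, 𝒜 ∈ ℝ^{N×N} with ℰ symmetric positive definite and 𝒜 + 𝒜ᵀ symmetric negative definite, let ℒ be an invertible matrix with ℰ = ℒℒᵀ (e.g., the Cholesky factor of ℰ), and let V ∈ ℝ^{N×k} have orthonormal columns. Then the projected matrix 𝒯 = Vᵀ ℒ^{-1} 𝒜 ℒ^{-ᵀ} V satisfies that 𝒯 + 𝒯ᵀ is negative definite, and consequently every eigenvalue of 𝒯 has negative real part. -/
open Matrix

noncomputable section

/-- A real matrix whose symmetric part is negative definite is Hurwitz: every complex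
eigenvalue has negative real part. -/
theorem re_neg_of_neg_add_transpose_posDef {n : Type*} [Fintype n] [DecidableEq n]
    {T : Matrix n n ℝ} (hT : (-(T + Tᵀ)).PosDef) {μ : ℂ}
    (hμ : (T.map Complex.ofReal - μ • (1 : Matrix n n ℂ)).det = 0) : μ.re < 0 := by
  obtain ⟨v, hv, h⟩ := exists_mulVec_eq_zero_iff.mpr hμ
  rw [sub_mulVec, smul_mulVec, one_mulVec, sub_eq_zero] at h
  set x : n → ℝ := fun i => (v i).re
  set y : n → ℝ := fun i => (v i).im
  have hTx : T *ᵥ x = μ.re • x - μ.im • y := by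
    ext i
    simpa [mulVec, dotProduct, Complex.re_sum] using congrArg Complex.re (congrFun h i)
  have hTy : T *ᵥ y = μ.re • y + μ.im • x := by
    ext i
    simpa [mulVec, dotProduct, Complex.im_sum] using congrArg Complex.im (congrFun h i)
  have quad (z : n → ℝ) : z ⬝ᵥ (-(T + Tᵀ)) *ᵥ z = -2 * (z ⬝ᵥ T *ᵥ z) := by
    have : z ⬝ᵥ Tᵀ *ᵥ z = z ⬝ᵥ T *ᵥ z := by
      rw [mulVec_transpose, dotProduct_comm, ← dotProduct_mulVec]
    rw [neg_mulVec, dotProduct_neg, add_mulVec, dotProduct_add, this]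
    ring
  have nonpos (z : n → ℝ) : z ⬝ᵥ T *ᵥ z ≤ 0 := by
    have := hT.posSemidef.dotProduct_mulVec_nonneg z
    rw [star_trivial, quad] at this
    linarith
  have neg {z : n → ℝ} (hz : z ≠ 0) : z ⬝ᵥ T *ᵥ z < 0 := by
    have := hT.dotProduct_mulVec_pos hz
    rw [star_trivial, quad] at this
    linarith
  have hsum : x ⬝ᵥ T *ᵥ x + y ⬝ᵥ T *ᵥ y = μ.re * (x ⬝ᵥ x + y ⬝ᵥ y) := by
    rw [hTx, hTy]
    simp only [dotProduct_sub, dotProduct_add, dotProduct_smul, smul_eq_mul,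
      dotProduct_comm y x]
    ring
  have hlt : x ⬝ᵥ T *ᵥ x + y ⬝ᵥ T *ᵥ y < 0 := by
    by_cases hx0 : x = 0
    · have hy0 : y ≠ 0 := fun hy0 =>
        hv (funext fun i => Complex.ext (congrFun hx0 i) (congrFun hy0 i))
      exact add_neg_of_nonpos_of_neg (nonpos x) (neg hy0)
    · exact add_neg_of_neg_of_nonpos (neg hx0) (nonpos y)
  have hnn (z : n → ℝ) : 0 ≤ z ⬝ᵥ z := Finset.sum_nonneg fun i _ => mul_self_nonneg (z i)
  exact neg_of_mul_neg_left (hsum ▸ hlt) (add_nonneg (hnn x) (hnn y))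

/-- Galerkin projection applied to (the standard state-space realization obtained from)
a strictly dissipative realization preserves stability: if `ℰ` is symmetric positive
definite with `ℰ = ℒℒᵀ` (`ℒ` invertible), `𝒜 + 𝒜ᵀ` is negative definite, and `V` has
orthonormal columns, then `𝒯 = Vᵀ ℒ⁻¹ 𝒜 ℒ⁻ᵀ V` satisfies that `𝒯 + 𝒯ᵀ` is negative
definite, and consequently every eigenvalue of `𝒯` has negative real part. -/
theorem projection_of_strictly_dissipative_is_stable {N k : ℕ}
    (ℰ 𝒜 : Matrix (Fin N) (Fin N) ℝ)
    (hℰ : ℰ.PosDef) (h𝒜 : (-(𝒜 + 𝒜ᵀ)).PosDef)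
    (ℒ : Matrix (Fin N) (Fin N) ℝ) (hℒ : IsUnit ℒ) (hEL : ℰ = ℒ * ℒᵀ)
    (V : Matrix (Fin N) (Fin k) ℝ) (hV : Vᵀ * V = 1)
    (𝒯 : Matrix (Fin k) (Fin k) ℝ)
    (h𝒯 : 𝒯 = Vᵀ * (ℒ⁻¹ * 𝒜 * ℒ⁻¹ᵀ) * V) :
    (-(𝒯 + 𝒯ᵀ)).PosDef ∧
    ∀ μ : ℂ, (𝒯.map Complex.ofReal - μ • (1 : Matrix (Fin k) (Fin k) ℂ)).det = 0 →
      μ.re < 0 := by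
  have hW : Function.Injective (ℒ⁻¹ᵀ * V).mulVec := by
    have hinv : Vᵀ * ℒᵀ * (ℒ⁻¹ᵀ * V) = 1 := by
      rw [Matrix.mul_assoc, ← Matrix.mul_assoc ℒᵀ, ← transpose_mul,
        nonsing_inv_mul _ ((isUnit_iff_isUnit_det ℒ).mp hℒ), transpose_one, Matrix.one_mul, hV]
    exact Function.LeftInverse.injective (g := (Vᵀ * ℒᵀ).mulVec) fun x => by
      rw [mulVec_mulVec, hinv, one_mulVec]
  have hT : (-(𝒯 + 𝒯ᵀ)).PosDef := by
    convert h𝒜.conjTranspose_mul_mul_same hW using 1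
    subst h𝒯
    simp only [conjTranspose_eq_transpose_of_trivial, transpose_mul, transpose_transpose,
      Matrix.mul_neg, Matrix.neg_mul, Matrix.mul_add, Matrix.add_mul, Matrix.mul_assoc]
  exact ⟨hT, fun _ => re_neg_of_neg_add_transpose_posDef hT⟩
end
end

section
/- Let M, E, K ∈ ℝ^{n×n} with M invertible, B_u ∈ ℝ^{n×m}, γ ∈ ℝ. Define the first companion form with J = I_n: ℰ₁ = [[I_n, 0], [0, M]], 𝒜₁ = [[0, I_n], [−K, −E]], ℬ₁ = [0; B_u]; the strictly dissipative realization ℰ₂ = [[K, γM], [γM, M]], 𝒜₂ = [[−γK, K − γE], [−K, −E + γM]], ℬ₂ = [γB_u; B_u]; and T = [[K, γI_n], [γM, I_n]]. Then ℰ₂ = Tℰ₁, 𝒜₂ = T𝒜₁, ℬ₂ = Tℬ₁. Consequently, if T is invertible, a matrix P ∈ ℝ^{2n×2n} satisfies 𝒜₂ P ℰ₂ᵀ + ℰ₂ P 𝒜₂ᵀ + ℬ₂ℬ₂ᵀ = 0 if and only if it satisfies 𝒜₁ P ℰ₁ᵀ + ℰ₁ P 𝒜₁ᵀ + ℬ₁ℬ₁ᵀ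 = 0; and for 𝒞 = [C_p, C_v], a matrix Q̃ satisfies 𝒜₂ᵀ Q̃ ℰ₂ + ℰ₂ᵀ Q̃ 𝒜₂ + 𝒞ᵀ𝒞 = 0 if and only if Q = Tᵀ Q̃ T satisfies 𝒜₁ᵀ Q ℰ₁ + ℰ₁ᵀ Q 𝒜₁ + 𝒞ᵀ𝒞 = 0. -/
open Matrix

noncomputable section

/-- Left multiplication of a generalized realization by an invertible matrix does not change
the solutions of the controllability Lyapunov equation. -/
theorem controllability_lyapunov_mul_left_iff {ι κ R : Type*} [Fintype ι] [DecidableEq ι]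
    [Fintype κ] [CommRing R] {T : Matrix ι ι R} (hT : IsUnit T) (A E P : Matrix ι ι R)
    (B : Matrix ι κ R) :
    (T * A) * P * (T * E)ᵀ + (T * E) * P * (T * A)ᵀ + (T * B) * (T * B)ᵀ = 0 ↔
      A * P * Eᵀ + E * P * Aᵀ + B * Bᵀ = 0 := by
  have hcongr : (T * A) * P * (T * E)ᵀ + (T * E) * P * (T * A)ᵀ + (T * B) * (T * B)ᵀ =
      T * (A * P * Eᵀ + E * P * Aᵀ + B * Bᵀ) * Tᵀ := by
    simp only [transpose_mul, Matrix.mul_add, Matrix.add_mul, Matrix.mul_assoc]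
  have hTt : IsUnit Tᵀ := (isUnit_transpose T).2 hT
  rw [hcongr, hTt.mul_left_eq_zero, hT.mul_right_eq_zero]

/-- The strictly dissipative realization `(ℰ₂, 𝒜₂, ℬ₂)` of a second-order system is
obtained from its first companion form `(ℰ₁, 𝒜₁, ℬ₁)` (with `J = I`) by left
multiplication with `T = [[K, γI], [γM, I]]`. Consequently, if `T` is invertible, the
controllability Gramians of the two realizations coincide, while the observability
Gramians are related by `Q = Tᵀ Qt T`. -/
theorem strictly_dissipative_vs_companion_gramians {n m p : ℕ}
    (M E K : Matrix (Fin n) (Fin n) ℝ) (hM : IsUnit M)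
    (Bu : Matrix (Fin n) (Fin m) ℝ) (Cp Cv : Matrix (Fin p) (Fin n) ℝ) (γ : ℝ)
    (ℰ₁ 𝒜₁ ℰ₂ 𝒜₂ T : Matrix (Fin n ⊕ Fin n) (Fin n ⊕ Fin n) ℝ)
    (ℬ₁ ℬ₂ : Matrix (Fin n ⊕ Fin n) (Fin m) ℝ)
    (𝒞 : Matrix (Fin p) (Fin n ⊕ Fin n) ℝ)
    (hℰ₁ : ℰ₁ = Matrix.fromBlocks 1 0 0 M)
    (h𝒜₁ : 𝒜₁ = Matrix.fromBlocks 0 1 (-K) (-E))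
    (hℬ₁ : ℬ₁ = Matrix.of (Sum.elim (fun _ _ => (0 : ℝ)) (fun i j => Bu i j)))
    (hℰ₂ : ℰ₂ = Matrix.fromBlocks K (γ • M) (γ • M) M)
    (h𝒜₂ : 𝒜₂ = Matrix.fromBlocks (-(γ • K)) (K - γ • E) (-K) (-E + γ • M))
    (hℬ₂ : ℬ₂ = Matrix.of (Sum.elim (fun i j => γ * Bu i j) (fun i j => Bu i j)))
    (hT : T = Matrix.fromBlocks K (γ • 1) (γ • M) 1)
    (h𝒞 : 𝒞 = Matrix.of (fun i => Sum.elim (fun j => Cp i j) (fun j => Cv i j))) :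
    ℰ₂ = T * ℰ₁ ∧ 𝒜₂ = T * 𝒜₁ ∧ ℬ₂ = T * ℬ₁ ∧
    (IsUnit T →
      (∀ P : Matrix (Fin n ⊕ Fin n) (Fin n ⊕ Fin n) ℝ,
        (𝒜₂ * P * ℰ₂ᵀ + ℰ₂ * P * 𝒜₂ᵀ + ℬ₂ * ℬ₂ᵀ = 0 ↔
          𝒜₁ * P * ℰ₁ᵀ + ℰ₁ * P * 𝒜₁ᵀ + ℬ₁ * ℬ₁ᵀ = 0)) ∧
      (∀ Qt : Matrix (Fin n ⊕ Fin n) (Fin n ⊕ Fin n) ℝ,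
        (𝒜₂ᵀ * Qt * ℰ₂ + ℰ₂ᵀ * Qt * 𝒜₂ + 𝒞ᵀ * 𝒞 = 0 ↔
          𝒜₁ᵀ * (Tᵀ * Qt * T) * ℰ₁ + ℰ₁ᵀ * (Tᵀ * Qt * T) * 𝒜₁ + 𝒞ᵀ * 𝒞 = 0))) := by
  have hE : ℰ₂ = T * ℰ₁ := by
    subst hℰ₁ hℰ₂ hT
    simp [fromBlocks_multiply]
  have hA : 𝒜₂ = T * 𝒜₁ := by
    subst h𝒜₁ h𝒜₂ hT
    simp [fromBlocks_multiply, sub_eq_add_neg, add_comm]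
  have hB : ℬ₂ = T * ℬ₁ := by
    have h₁ : ℬ₁ = fromRows 0 Bu := hℬ₁
    have h₂ : ℬ₂ = fromRows (γ • Bu) Bu := hℬ₂
    rw [h₁, h₂, hT, fromBlocks_mul_fromRows]
    simp
  refine ⟨hE, hA, hB, fun hTu => ⟨fun P => ?_, fun Qt => ?_⟩⟩
  · rw [hE, hA, hB]
    exact controllability_lyapunov_mul_left_iff hTu 𝒜₁ ℰ₁ P ℬ₁
  · rw [hE, hA]
    simp only [transpose_mul, Matrix.mul_assoc]
end
end

section
/- Let M, E, K ∈ ℝ^{n×n} be symmetric positive definite and let T ∈ ℝ^{n×r} have full column rank r. Then the reduced matrices M̂ = TᵀMT, Ê = TᵀET, K̂ = TᵀKT are symmetric positive definite, and every λ ∈ ℂ with det(λ²M̂ + λÊ + K̂) = 0 has negative real part. In particular, any one-sided structure-preserving projection (such as the free-velocity (fv) second-order balanced truncation, which uses W = T) of a second-order system with symmetric positive definite M, E, K yields an asymptotically stable reduced-order second-order system. -/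
open Matrix

noncomputable section

open scoped ComplexOrder MatrixOrder in
/-- A real positive definite matrix stays positive definite when regarded as a complex matrix. -/
theorem Matrix.PosDef.map_complexOfReal {ι : Type*} [Fintype ι]
    {A : Matrix ι ι ℝ} (hA : A.PosDef) : (A.map Complex.ofReal).PosDef := by
  classical
  obtain ⟨B, hB⟩ := CStarAlgebra.nonneg_iff_eq_star_mul_self.mp hA.posSemidef.nonneg
  have hmap : A.map Complex.ofReal = (B.map Complex.ofReal)ᴴ * B.map Complex.ofReal := by
    have hstar : (B.map Complex.ofReal)ᴴ = (star B).map Complex.ofReal := by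
      ext i j
      simp [star_eq_conjTranspose]
    rw [hstar, hB]
    exact Matrix.map_mul (f := Complex.ofRealHom)
  have hunit : IsUnit (A.map Complex.ofReal) := hA.isUnit.map Complex.ofRealHom.mapMatrix
  have hsemi : (A.map Complex.ofReal).PosSemidef :=
    hmap ▸ posSemidef_conjTranspose_mul_self _
  exact hsemi.posDef_iff_isUnit.mpr hunit

/-- A matrix whose rank equals its number of columns has trivial kernel. -/
theorem Matrix.mulVec_injective_of_rank_eq_card {m n F : Type*} [Fintype m] [Fintype n] [Field F]
    {T : Matrix m n F} (hT : T.rank = Fintype.card n) : Function.Injective T.mulVec := by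
  have hker := T.mulVecLin.finrank_range_add_finrank_ker
  rw [Module.finrank_fintype_fun_eq_card] at hker
  change T.rank + _ = _ at hker
  have hzero : Module.finrank F (LinearMap.ker T.mulVecLin) = 0 := by omega
  exact LinearMap.ker_eq_bot.mp (Submodule.finrank_eq_zero.mp hzero)

/-- The roots of a real quadratic polynomial with positive coefficients lie in the open left
half-plane. -/
theorem Complex.re_neg_of_quadratic_eq_zero {m e k : ℝ} (hm : 0 < m) (he : 0 < e) (hk : 0 < k)
    {μ : ℂ} (h : μ ^ 2 * m + μ * e + k = 0) : μ.re < 0 := by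
  by_contra! hre
  have him := congrArg Complex.im h
  have hreal := congrArg Complex.re h
  simp [pow_two] at him hreal
  have hzero : μ.im = 0 := by
    have hfac : μ.im * (2 * μ.re * m + e) = 0 := by linear_combination him
    have hpos : 0 < 2 * μ.re * m + e := by positivity
    exact (mul_eq_zero.mp hfac).resolve_right hpos.ne'
  rw [hzero] at hreal
  have : 0 ≤ μ.re * μ.re * m := by positivity
  have : 0 ≤ μ.re * e := by positivity
  linarith

open scoped ComplexOrder in
/-- A quadratic matrix pencil with real positive definite coefficients is c-stable. -/
theorem Matrix.PosDef.re_neg_of_det_quadratic_eq_zero {ι : Type*} [Fintype ι] [DecidableEq ι]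
    {M E K : Matrix ι ι ℝ} (hM : M.PosDef) (hE : E.PosDef) (hK : K.PosDef) {μ : ℂ}
    (h : (μ ^ 2 • M.map Complex.ofReal + μ • E.map Complex.ofReal +
      K.map Complex.ofReal).det = 0) : μ.re < 0 := by
  obtain ⟨v, hv, hv0⟩ := exists_mulVec_eq_zero_iff.mpr h
  have hform {A : Matrix ι ι ℝ} (hA : A.PosDef) :
      ∃ a : ℝ, 0 < a ∧ star v ⬝ᵥ (A.map Complex.ofReal *ᵥ v) = a := by
    obtain ⟨hre, him⟩ := Complex.pos_iff.mp (hA.map_complexOfReal.dotProduct_mulVec_pos hv)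
    exact ⟨_, hre, Complex.ext rfl (by simpa using him.symm)⟩
  obtain ⟨m, hm, hmv⟩ := hform hM
  obtain ⟨e, he, hev⟩ := hform hE
  obtain ⟨k, hk, hkv⟩ := hform hK
  refine Complex.re_neg_of_quadratic_eq_zero hm he hk ?_
  have hquad := congrArg (star v ⬝ᵥ ·) hv0
  simpa only [add_mulVec, smul_mulVec, dotProduct_add, dotProduct_smul, hmv, hev, hkv,
    dotProduct_zero, smul_eq_mul] using hquad

/-- One-sided structure-preserving projection of a second-order system with symmetric
positive definite `M, E, K` (e.g., free-velocity second-order balanced truncation with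
`W = T`) yields an asymptotically stable reduced second-order system: for `T` of full
column rank, `M̂ = TᵀMT`, `Ê = TᵀET`, `K̂ = TᵀKT` are symmetric positive definite and
every `λ ∈ ℂ` with `det(λ²M̂ + λÊ + K̂) = 0` has negative real part. -/
theorem one_sided_projection_preserves_stability {n r : ℕ}
    (M E K : Matrix (Fin n) (Fin n) ℝ)
    (hM : M.PosDef) (hE : E.PosDef) (hK : K.PosDef)
    (T : Matrix (Fin n) (Fin r) ℝ) (hT : T.rank = r) :
    (Tᵀ * M * T).PosDef ∧ (Tᵀ * E * T).PosDef ∧ (Tᵀ * K * T).PosDef ∧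
    ∀ μ : ℂ,
      (μ ^ 2 • (Tᵀ * M * T).map Complex.ofReal + μ • (Tᵀ * E * T).map Complex.ofReal +
        (Tᵀ * K * T).map Complex.ofReal).det = 0 → μ.re < 0 := by
  have hinj : Function.Injective T.mulVec :=
    mulVec_injective_of_rank_eq_card (by simpa using hT)
  have hproj {A : Matrix (Fin n) (Fin n) ℝ} (hA : A.PosDef) : (Tᵀ * A * T).PosDef := by
    simpa only [conjTranspose_eq_transpose_of_trivial] using hA.conjTranspose_mul_mul_same hinj
  exact ⟨hproj hM, hproj hE, hproj hK, fun μ =>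
    (hproj hM).re_neg_of_det_quadratic_eq_zero (hproj hE) (hproj hK)⟩
end
end

section
/- Let ℰ, 𝒜 ∈ ℝ^{N×N} with ℰ invertible and the pencil λℰ − 𝒜 c-stable. Define the scaled Newton sign-function iteration A₁ = 𝒜 and, for k ≥ 1, c_k = (‖A_k‖_F / ‖ℰ A_k^{-1} ℰ‖_F)^{1/2} and A_{k+1} = (1/(2c_k)) A_k + (c_k/2) ℰ A_k^{-1} ℰ. Then every iterate A_k is invertible with λℰ − A_k c-stable (so the iteration is well defined), and A_k converges to −ℰ as k → ∞. -/
open Matrix Filter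

noncomputable section

/-- The Frobenius norm of a real matrix. -/
def frobNorm {a b : ℕ} (A : Matrix (Fin a) (Fin b) ℝ) : ℝ :=
  Real.sqrt (∑ i, ∑ j, (A i j) ^ 2)

/-- The Cayley transform `(f - 1) (f + 1)⁻¹`, where defined, contracts the quadratic form of `B` by
the factor `r`. -/
def IsCayleyContraction {V : Type*} [AddCommGroup V] [Module ℝ V]
    (B : LinearMap.BilinForm ℝ V) (r : ℝ) (f : V →ₗ[ℝ] V) : Prop :=
  ∀ w, B (f w - w) (f w - w) ≤ r * B (f w + w) (f w + w)

namespace IsCayleyContraction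

variable {V : Type*} [AddCommGroup V] [Module ℝ V] {B : LinearMap.BilinForm ℝ V}
  {r r' : ℝ} {f : V →ₗ[ℝ] V}

theorem mono (hB : ∀ v, 0 ≤ B v v) (h : IsCayleyContraction B r f) (hr : r ≤ r') :
    IsCayleyContraction B r' f := fun w =>
  (h w).trans (mul_le_mul_of_nonneg_right hr (hB _))

theorem add_le (hsymm : ∀ v w, B v w = B w v) (h : IsCayleyContraction B r f) (w : V) :
    (1 - r) * (B (f w) (f w) + B w w) ≤ 2 * (1 + r) * B (f w) w := by
  have := h w
  simp only [map_add, map_sub, LinearMap.add_apply, LinearMap.sub_apply, hsymm w (f w)] at this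
  linarith

theorem apply_le (hB : ∀ v, 0 ≤ B v v) (hsymm : ∀ v w, B v w = B w v)
    (h : IsCayleyContraction B r f) (hr : r < 1) (w : V) :
    B (f w) (f w) ≤ (2 * (1 + r) / (1 - r)) ^ 2 * B w w := by
  have h1 := h.add_le hsymm w
  have hr' : 0 < 1 - r := by linarith
  set L := 2 * (1 + r) / (1 - r) with hL
  have h2 : B (f w) (f w) + B w w ≤ L * B (f w) w := by
    rw [hL, div_mul_eq_mul_div, le_div_iff₀ hr']; linarith
  have h3 := hB (f w - L • w)
  simp only [map_sub, map_smul, LinearMap.sub_apply, LinearMap.smul_apply, smul_eq_mul,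
    hsymm w (f w)] at h3
  nlinarith [hB w, hB (f w)]

theorem le_apply (hB : ∀ v, 0 ≤ B v v) (hsymm : ∀ v w, B v w = B w v)
    (h : IsCayleyContraction B r f) (hr : r < 1) (w : V) :
    B w w ≤ (2 * (1 + r) / (1 - r)) ^ 2 * B (f w) (f w) := by
  have h1 := h.add_le hsymm w
  have hr' : 0 < 1 - r := by linarith
  set L := 2 * (1 + r) / (1 - r) with hL
  have h2 : B (f w) (f w) + B w w ≤ L * B (f w) w := by
    rw [hL, div_mul_eq_mul_div, le_div_iff₀ hr']; linarith
  have h3 := hB (w - L • f w)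
  simp only [map_sub, map_smul, LinearMap.sub_apply, LinearMap.smul_apply, smul_eq_mul,
    hsymm w (f w)] at h3
  nlinarith [hB w, hB (f w)]

/-- Scaling by a factor between `C⁻¹` and `C` keeps the contraction constant below one, uniformly
in the factor. -/
theorem smul (hB : ∀ v, 0 ≤ B v v) (hsymm : ∀ v w, B v w = B w v)
    (h : IsCayleyContraction B r f) (hr0 : 0 ≤ r) (hr : r < 1) {C t : ℝ} (hC : 1 ≤ C)
    (ht : C⁻¹ ≤ t) (htC : t ≤ C) :
    IsCayleyContraction B (1 - (1 - r) / ((1 + r) * C ^ 3)) (t • f) := by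
  intro w
  have hC0 : 0 < C := by linarith
  have h1 := h.add_le hsymm w
  have hinv : 0 < C⁻¹ := inv_pos.mpr hC0
  have ht0 : 0 < t := by linarith
  have hsq := hB (t • f w - w)
  have hfw := hB (f w)
  have hw := hB w
  simp only [map_add, map_sub, map_smul, LinearMap.add_apply, LinearMap.sub_apply,
    LinearMap.smul_apply, smul_eq_mul, hsymm w (f w)] at hsq ⊢
  set a := B (f w) (f w)
  set d := B w w
  set e := B (f w) w
  set δ := (1 - r) / ((1 + r) * C ^ 3) with hδ
  have hr' : 0 < 1 - r := by linarith
  have hδ0 : 0 < δ := by positivity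
  have hδC : δ * ((1 + r) * C ^ 3) = 1 - r := div_mul_cancel₀ _ (by positivity)
  have he : 0 ≤ e := by nlinarith
  have htC1 : 1 ≤ t * C := by rwa [inv_le_iff_one_le_mul₀ hC0] at ht
  have hupper : t * (t * a + e) + (t * e + d) ≤ 2 * C ^ 2 * (a + d) := by
    have h2 : t ^ 2 ≤ C ^ 2 := by gcongr
    have h3 : 1 ≤ C ^ 2 := one_le_pow₀ hC
    nlinarith [mul_le_mul_of_nonneg_right h2 hfw, mul_le_mul_of_nonneg_right h3 hw]
  have hlower : δ * (2 * C ^ 2 * (a + d)) ≤ 4 * (t * e) := by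
    refine le_of_mul_le_mul_left ?_ (show 0 < (1 + r) * C by positivity)
    calc (1 + r) * C * (δ * (2 * C ^ 2 * (a + d)))
        = 2 * (δ * ((1 + r) * C ^ 3) * (a + d)) := by ring
      _ ≤ 2 * (2 * (1 + r) * e) := by rw [hδC]; linarith
      _ ≤ 4 * ((1 + r) * e) * (t * C) := by
          have : 0 ≤ 4 * ((1 + r) * e) := by positivity
          nlinarith
      _ = (1 + r) * C * (4 * (t * e)) := by ring
  nlinarith [mul_le_mul_of_nonneg_left hupper hδ0.le]

/-- The Cayley transform of `(t f + f⁻¹) / (t + 1)` is the product of those of `f` and `t f`. -/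
theorem newton_step {q t : ℝ} {g f' : V →ₗ[ℝ] V} (hq : 0 ≤ q)
    (h : IsCayleyContraction B r f) (ht : IsCayleyContraction B q (t • f)) (ht0 : 0 < t)
    (hg : ∀ w, f (g w) = w) (hf' : ∀ w, (t + 1) • f' w = t • f w + g w) :
    IsCayleyContraction B (q * r) f' := by
  intro w
  set z := g w with hz
  have hw : f z = w := hg w
  have e1 : (t + 1) • (f' w - w) = (t • f) (f z - z) - (f z - z) := by
    rw [smul_sub, hf']; simp only [LinearMap.smul_apply, map_sub, hw]; module
  have e2 : (t + 1) • (f' w + w) = f ((t • f) z + z) + ((t • f) z + z) := by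
    rw [smul_add, hf']; simp only [LinearMap.smul_apply, map_add, map_smul, hw]; module
  have e3 : (t • f) (f z - z) + (f z - z) = f ((t • f) z + z) - ((t • f) z + z) := by
    simp only [LinearMap.smul_apply, map_add, map_sub, map_smul]; module
  have h1 := ht (f z - z)
  have h2 := h ((t • f) z + z)
  rw [e3, ← e1] at h1
  rw [← e2] at h2
  have h3 := h1.trans (mul_le_mul_of_nonneg_left h2 hq)
  simp only [map_smul, LinearMap.smul_apply, smul_eq_mul] at h3
  have h4 : 0 < (t + 1) * (t + 1) := by positivity
  refine le_of_mul_le_mul_left ?_ h4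
  linarith
end IsCayleyContraction

section FrobeniusNorm

variable {l m n : ℕ}

theorem frobNorm_nonneg (A : Matrix (Fin m) (Fin n) ℝ) : 0 ≤ frobNorm A := Real.sqrt_nonneg _

theorem frobNorm_sq (A : Matrix (Fin m) (Fin n) ℝ) :
    frobNorm A ^ 2 = ∑ i, ∑ j, A i j ^ 2 :=
  Real.sq_sqrt (by positivity)

theorem frobNorm_pos {A : Matrix (Fin m) (Fin n) ℝ} (hA : A ≠ 0) : 0 < frobNorm A := by
  refine Real.sqrt_pos.mpr ?_
  obtain ⟨i, j, hij⟩ : ∃ i j, A i j ≠ 0 := by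
    by_contra! h
    exact hA (Matrix.ext h)
  exact Finset.sum_pos' (fun _ _ => by positivity)
    ⟨i, Finset.mem_univ _, Finset.sum_pos' (fun _ _ => by positivity)
      ⟨j, Finset.mem_univ _, by positivity⟩⟩

theorem frobNorm_smul (a : ℝ) (A : Matrix (Fin m) (Fin n) ℝ) :
    frobNorm (a • A) = |a| * frobNorm A := by
  simp only [frobNorm, Matrix.smul_apply, smul_eq_mul, mul_pow, ← Finset.mul_sum]
  rw [Real.sqrt_mul (sq_nonneg a), Real.sqrt_sq_eq_abs]

theorem frobNorm_neg (A : Matrix (Fin m) (Fin n) ℝ) : frobNorm (-A) = frobNorm A := by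
  simp [frobNorm]

theorem continuous_frobNorm : Continuous (frobNorm : Matrix (Fin m) (Fin n) ℝ → ℝ) := by
  unfold frobNorm
  fun_prop

attribute [local instance] Matrix.frobeniusNormedAddCommGroup in
theorem norm_map_ofReal_eq_frobNorm (A : Matrix (Fin m) (Fin n) ℝ) :
    ‖A.map Complex.ofReal‖ = frobNorm A := by
  simp [Matrix.frobenius_norm_def, frobNorm, Real.sqrt_eq_rpow]

attribute [local instance] Matrix.frobeniusNormedAddCommGroup in
theorem frobNorm_mul_le (A : Matrix (Fin l) (Fin m) ℝ) (B : Matrix (Fin m) (Fin n) ℝ) :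
    frobNorm (A * B) ≤ frobNorm A * frobNorm B := by
  have h (p q : ℕ) (M : Matrix (Fin p) (Fin q) ℝ) : frobNorm M = ‖M‖ := by
    simp [Matrix.frobenius_norm_def, frobNorm, Real.sqrt_eq_rpow]
  simpa only [h] using Matrix.frobenius_norm_mul A B

theorem frobNorm_mul_div_le (E : Matrix (Fin m) (Fin n) ℝ) {Y Z : Matrix (Fin n) (Fin n) ℝ}
    (h : Y * Z = 1) : frobNorm (E * Z) / frobNorm (E * Y) ≤ frobNorm Z ^ 2 := by
  refine div_le_of_le_mul₀ (frobNorm_nonneg _) (by positivity) ?_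
  calc frobNorm (E * Z) = frobNorm (E * Y * Z * Z) := by rw [Matrix.mul_assoc E, h, Matrix.mul_one]
    _ ≤ frobNorm (E * Y) * frobNorm Z * frobNorm Z :=
        (frobNorm_mul_le _ _).trans
          (mul_le_mul_of_nonneg_right (frobNorm_mul_le _ _) (frobNorm_nonneg _))
    _ = frobNorm Z ^ 2 * frobNorm (E * Y) := by ring

theorem dotProduct_mulVec_self_le (A : Matrix (Fin m) (Fin n) ℝ) (v : Fin n → ℝ) :
    (A *ᵥ v) ⬝ᵥ (A *ᵥ v) ≤ frobNorm A ^ 2 * (v ⬝ᵥ v) := by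
  rw [frobNorm_sq, Finset.sum_mul]
  refine Finset.sum_le_sum fun i _ => ?_
  have := Finset.sum_mul_sq_le_sq_mul_sq Finset.univ (A i) v
  simpa [Matrix.mulVec, dotProduct, sq] using this

theorem frobNorm_sq_le_of_forall {B : LinearMap.BilinForm ℝ (Fin m → ℝ)}
    (hB : ∀ v, v ⬝ᵥ v ≤ B v v) {Y : Matrix (Fin m) (Fin m) ℝ} {L : ℝ}
    (h : ∀ w, B (Y *ᵥ w) (Y *ᵥ w) ≤ L * B w w) :
    frobNorm Y ^ 2 ≤ L * ∑ j, B (Pi.single j 1) (Pi.single j 1) := by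
  rw [frobNorm_sq, Finset.sum_comm, Finset.mul_sum]
  refine Finset.sum_le_sum fun j _ => le_trans ?_ (h _)
  refine le_trans (le_of_eq ?_) (hB _)
  simp [dotProduct, sq]

end FrobeniusNorm

theorem exists_bilinForm_of_frobNorm_pow_lt_one {N m : ℕ} {Q : Matrix (Fin N) (Fin N) ℝ}
    (hm : 0 < m) (hQ : frobNorm (Q ^ m) < 1) :
    ∃ (B : LinearMap.BilinForm ℝ (Fin N → ℝ)) (r : ℝ), (∀ v w, B v w = B w v) ∧
      (∀ v, v ⬝ᵥ v ≤ B v v) ∧ 0 ≤ r ∧ r < 1 ∧ ∀ v, B (Q *ᵥ v) (Q *ᵥ v) ≤ r * B v v := by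
  obtain ⟨B, hBv⟩ : ∃ B : LinearMap.BilinForm ℝ (Fin N → ℝ), ∀ v w,
      B v w = ∑ j ∈ Finset.range m, (Q ^ j *ᵥ v) ⬝ᵥ (Q ^ j *ᵥ w) :=
    ⟨LinearMap.mk₂ ℝ (fun v w => ∑ j ∈ Finset.range m, (Q ^ j *ᵥ v) ⬝ᵥ (Q ^ j *ᵥ w))
      (fun _ _ _ => by simp [Matrix.mulVec_add, Finset.sum_add_distrib])
      (fun _ _ _ => by simp [Matrix.mulVec_smul, Finset.mul_sum])
      (fun _ _ _ => by simp [Matrix.mulVec_add, Finset.sum_add_distrib])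
      (fun _ _ _ => by simp [Matrix.mulVec_smul, Finset.mul_sum]), fun _ _ => rfl⟩
  have hpos (v : Fin N → ℝ) : 0 ≤ v ⬝ᵥ v := Finset.sum_nonneg fun _ _ => mul_self_nonneg _
  set η := frobNorm (Q ^ m) ^ 2 with hη
  have hη1 : η < 1 := pow_lt_one₀ (frobNorm_nonneg _) hQ two_ne_zero
  have hη0 : 0 ≤ η := sq_nonneg _
  set S := 1 + ∑ j ∈ Finset.range m, frobNorm (Q ^ j) ^ 2 with hS
  have hS1 : 1 ≤ S := by
    have : 0 ≤ ∑ j ∈ Finset.range m, frobNorm (Q ^ j) ^ 2 :=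
      Finset.sum_nonneg fun _ _ => sq_nonneg _
    linarith
  have hS0 : 0 < S := by linarith
  have hBS (v) : B v v ≤ S * (v ⬝ᵥ v) := by
    rw [hBv, hS, add_mul, one_mul, Finset.sum_mul]
    exact (Finset.sum_le_sum fun j _ => dotProduct_mulVec_self_le _ v).trans
      (le_add_of_nonneg_left (hpos v))
  have hBQ (v) : B (Q *ᵥ v) (Q *ᵥ v) = B v v - v ⬝ᵥ v + (Q ^ m *ᵥ v) ⬝ᵥ (Q ^ m *ᵥ v) := by
    have h1 := Finset.sum_range_succ (fun j => (Q ^ j *ᵥ v) ⬝ᵥ (Q ^ j *ᵥ v)) m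
    rw [Finset.sum_range_succ'] at h1
    simp only [pow_zero, Matrix.one_mulVec] at h1
    simp only [hBv, Matrix.mulVec_mulVec, ← pow_succ]
    linarith
  refine ⟨B, 1 - (1 - η) / S, fun v w => ?_, fun v => ?_, ?_, ?_, fun v => ?_⟩
  · simp only [hBv, dotProduct_comm]
  · rw [hBv]
    have := Finset.single_le_sum (f := fun j => (Q ^ j *ᵥ v) ⬝ᵥ (Q ^ j *ᵥ v))
      (fun j _ => hpos _) (Finset.mem_range.mpr hm)
    simpa using this
  · have : (1 - η) / S ≤ 1 := by rw [div_le_one hS0]; linarith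
    linarith
  · have : 0 < (1 - η) / S := div_pos (by linarith) hS0
    linarith
  · have h1 : (1 - η) / S * B v v ≤ (1 - η) * (v ⬝ᵥ v) := by
      rw [div_mul_eq_mul_div, div_le_iff₀ hS0]
      nlinarith [hBS v]
    have h2 := dotProduct_mulVec_self_le (Q ^ m) v
    rw [hBQ]
    linarith

attribute [local instance] Matrix.frobeniusNormedRing Matrix.frobeniusNormedAlgebra in
theorem exists_frobNorm_pow_lt_one {N : ℕ} [NeZero N] {Q : Matrix (Fin N) (Fin N) ℝ}
    (hQ : ∀ q : ℂ, (q • 1 - Q.map Complex.ofReal).det = 0 → ‖q‖ < 1) :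
    ∃ m, 0 < m ∧ frobNorm (Q ^ m) < 1 := by
  have : CompleteSpace (Matrix (Fin N) (Fin N) ℂ) := FiniteDimensional.complete ℂ _
  set a : Matrix (Fin N) (Fin N) ℂ := Q.map Complex.ofReal with ha
  have hrad : spectralRadius ℂ a < (1 : NNReal) := by
    refine spectrum.spectralRadius_lt_of_forall_lt a fun z hz => hQ z ?_
    rw [spectrum.mem_iff, Matrix.isUnit_iff_isUnit_det, isUnit_iff_ne_zero, not_not] at hz
    rwa [← Algebra.algebraMap_eq_smul_one]
  have hlim := (spectrum.pow_norm_pow_one_div_tendsto_nhds_spectralRadius a).eventually_lt_const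
    hrad
  obtain ⟨m, hm, hm0⟩ := (hlim.and (eventually_gt_atTop 0)).exists
  refine ⟨m, hm0, ?_⟩
  have hpow : (Q ^ m).map Complex.ofReal = a ^ m := map_pow Complex.ofRealHom.mapMatrix Q m
  rw [← norm_map_ofReal_eq_frobNorm, hpow]
  by_contra! h
  rw [ENNReal.coe_one, ENNReal.ofReal_lt_one] at hm
  exact absurd (Real.one_le_rpow h (by positivity)) (not_le.mpr hm)

section Stability

variable {N : ℕ} {E A : Matrix (Fin N) (Fin N) ℝ}

theorem CStablePencil.isUnit (h : CStablePencil E A) : IsUnit A := by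
  rw [Matrix.isUnit_iff_isUnit_det, isUnit_iff_ne_zero]
  intro hA
  have hdet : (A.map Complex.ofReal).det = 0 := by
    have := (Complex.ofRealHom.map_det A).symm
    rw [hA, map_zero] at this
    exact this
  have h0 := h 0 (by rw [zero_smul, zero_sub, Matrix.det_neg, hdet, mul_zero])
  simp at h0

theorem Complex.re_neg_of_mul_eq_sq {x y : ℂ} {c : ℝ} (hc : 0 < c) (h : x * y = (c : ℂ) ^ 2)
    (hx : x.re < 0) : y.re < 0 := by
  have h1 := congrArg Complex.re h
  have h2 := congrArg Complex.im h
  simp only [sq, Complex.mul_re, Complex.mul_im, Complex.ofReal_re, Complex.ofReal_im] at h1 h2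
  have h3 : y.re * (x.re ^ 2 + x.im ^ 2) = c ^ 2 * x.re := by
    linear_combination x.re * h1 + x.im * h2
  have h4 : c ^ 2 * x.re < 0 := mul_neg_of_pos_of_neg (by positivity) hx
  by_contra! h5
  have : 0 ≤ y.re * (x.re ^ 2 + x.im ^ 2) := by positivity
  linarith

theorem CStablePencil.newton_step (h : CStablePencil E A) {c : ℝ} (hc : 0 < c) :
    CStablePencil E ((1 / (2 * c)) • A + (c / 2) • (E * A⁻¹ * E)) := by
  intro μ hμ
  set e := E.map Complex.ofReal with he
  set a := A.map Complex.ofReal with ha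
  set b := A⁻¹.map Complex.ofReal with hb
  have hcC : (c : ℂ) ≠ 0 := by exact_mod_cast hc.ne'
  have hAA := Matrix.isUnit_iff_isUnit_det A |>.mp h.isUnit
  have hab : a * b = 1 := by
    have := congrArg Complex.ofRealHom.mapMatrix (Matrix.mul_nonsing_inv A hAA)
    rwa [map_mul, map_one] at this
  have hba : b * a = 1 := mul_eq_one_comm.mp hab
  have hebe : (E * A⁻¹ * E).map Complex.ofReal = e * b * e :=
    (map_mul Complex.ofRealHom.mapMatrix (E * A⁻¹) E).trans
      (congrArg (· * e) (map_mul Complex.ofRealHom.mapMatrix E A⁻¹))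
  have hstep : ((1 / (2 * c)) • A + (c / 2) • (E * A⁻¹ * E)).map Complex.ofReal
      = (1 / (2 * c) : ℂ) • a + (c / 2 : ℂ) • (e * b * e) := by
    rw [← hebe]
    ext i j
    simp [ha]
  rw [hstep] at hμ
  obtain ⟨w, hw⟩ := IsAlgClosed.exists_pow_nat_eq ((c : ℂ) ^ 2 * μ ^ 2 - (c : ℂ) ^ 2) two_pos
  have hsum : (c * μ + w) + (c * μ - w) = 2 * c * μ := by ring
  have hprod : (c * μ + w) * (c * μ - w) = (c : ℂ) ^ 2 := by linear_combination -hw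
  generalize c * μ + w = x at hsum hprod
  generalize c * μ - w = y at hsum hprod
  have hfac : (x • e - a) * b * (y • e - a)
      = (-(2 * c) : ℂ) • (μ • e - ((1 / (2 * c) : ℂ) • a + (c / 2 : ℂ) • (e * b * e))) := by
    have h1 : (x • e - a) * b * (y • e - a)
        = (x * y) • (e * b * e) - (x + y) • e + a := by
      simp only [sub_mul, mul_sub, Matrix.smul_mul, Matrix.mul_smul, smul_smul, hab, Matrix.one_mul,
        Matrix.mul_assoc, hba, Matrix.mul_one, add_smul]
      rw [mul_comm y x]
      abel
    rw [h1, hsum, hprod]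
    simp only [smul_sub, smul_add, smul_smul]
    have h2 : (-(2 * c) * (1 / (2 * c)) : ℂ) = -1 := by field_simp
    have h3 : (-(2 * c) * (c / 2) : ℂ) = -(c : ℂ) ^ 2 := by ring
    rw [h2, h3]
    module
  have hdet : ((x • e - a) * b * (y • e - a)).det = 0 := by
    rw [hfac, Matrix.det_smul, hμ, mul_zero]
  have hb0 : b.det ≠ 0 := fun h0 => by
    have := congrArg Matrix.det hab
    simp [h0] at this
  rw [Matrix.det_mul, Matrix.det_mul] at hdet
  have hxy : x.re < 0 ∧ y.re < 0 := by
    rcases mul_eq_zero.mp hdet with h1 | h1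
    · have hx := h x ((mul_eq_zero.mp h1).resolve_right hb0)
      exact ⟨hx, Complex.re_neg_of_mul_eq_sq hc hprod hx⟩
    · have hy := h y h1
      exact ⟨Complex.re_neg_of_mul_eq_sq hc (by rwa [mul_comm]) hy, hy⟩
  have hre : x.re + y.re = 2 * c * μ.re := by
    have := congrArg Complex.re hsum
    simpa using this
  by_contra! h0
  have : 0 ≤ 2 * c * μ.re := by positivity
  linarith [hxy.1, hxy.2]

theorem Complex.norm_lt_one_of_cayley {q z : ℂ} (hz : 0 < z.re) (h : q * (z + 1) = z - 1) :
    ‖q‖ < 1 := by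
  have h1 : ‖z - 1‖ < ‖z + 1‖ := by
    rw [← sq_lt_sq₀ (norm_nonneg _) (norm_nonneg _), Complex.sq_norm, Complex.sq_norm,
      Complex.normSq_apply, Complex.normSq_apply]
    simp only [Complex.sub_re, Complex.add_re, Complex.one_re, Complex.sub_im, Complex.add_im,
      Complex.one_im]
    nlinarith
  rw [← h, norm_mul] at h1
  by_contra! h2
  nlinarith [norm_nonneg (z + 1)]

/-- A real matrix with spectrum in the open right half-plane is a Cayley contraction for a
suitable inner product. -/
theorem exists_isCayleyContraction [NeZero N] {Y : Matrix (Fin N) (Fin N) ℝ}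
    (hY : ∀ z : ℂ, (z • 1 - Y.map Complex.ofReal).det = 0 → 0 < z.re) :
    ∃ (B : LinearMap.BilinForm ℝ (Fin N → ℝ)) (r : ℝ), (∀ v w, B v w = B w v) ∧
      (∀ v, v ⬝ᵥ v ≤ B v v) ∧ 0 ≤ r ∧ r < 1 ∧ IsCayleyContraction B r Y.mulVecLin := by
  set y := Y.map Complex.ofReal with hy
  have hmap1 : (Y + 1).map Complex.ofReal = y + 1 := by
    have := map_add Complex.ofRealHom.mapMatrix Y 1
    rwa [map_one] at this
  have hunit : IsUnit (Y + 1).det := by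
    rw [isUnit_iff_ne_zero]
    intro h0
    have h1 : (y + 1).det = 0 := by
      have := (Complex.ofRealHom.map_det (Y + 1)).symm
      rw [h0, map_zero] at this
      rw [← hmap1]
      exact this
    have h2 := hY (-1) (by
      rw [show (-1 : ℂ) • (1 : Matrix (Fin N) (Fin N) ℂ) - y = -(y + 1) by module,
        Matrix.det_neg, h1, mul_zero])
    norm_num at h2
  set Q := (Y - 1) * (Y + 1)⁻¹ with hQ
  have hQY : Q * (Y + 1) = Y - 1 := by
    rw [hQ, Matrix.mul_assoc, Matrix.nonsing_inv_mul _ hunit, Matrix.mul_one]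
  have hQy : Q.map Complex.ofReal * (y + 1) = y - 1 := by
    have := congrArg Complex.ofRealHom.mapMatrix hQY
    rwa [map_mul, map_add, map_sub, map_one] at this
  obtain ⟨m, hm0, hm⟩ := exists_frobNorm_pow_lt_one (Q := Q) fun q hq => by
    have h1 : ((q • 1 - Q.map Complex.ofReal) * (y + 1)).det = 0 := by
      rw [Matrix.det_mul, hq, zero_mul]
    rw [sub_mul, hQy, Matrix.smul_mul, Matrix.one_mul] at h1
    have hq1 : q ≠ 1 := by
      rintro rfl
      rw [show (1 : ℂ) • (y + 1) - (y - 1) = (2 : ℂ) • 1 by module, Matrix.det_smul] at h1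
      simp at h1
    have hq1' : 1 - q ≠ 0 := sub_ne_zero.mpr hq1.symm
    have h2 : q • (y + 1) - (y - 1) = (1 - q) • (((1 + q) / (1 - q)) • 1 - y) := by
      rw [smul_sub, smul_smul, mul_div_cancel₀ _ hq1']
      module
    rw [h2, Matrix.det_smul] at h1
    refine Complex.norm_lt_one_of_cayley
      (hY _ ((mul_eq_zero.mp h1).resolve_left (pow_ne_zero _ hq1'))) ?_
    field_simp
    ring
  obtain ⟨B, r, hsymm, hB, hr0, hr1, h⟩ := exists_bilinForm_of_frobNorm_pow_lt_one hm0 hm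
  refine ⟨B, r, hsymm, hB, hr0, hr1, fun w => ?_⟩
  have h1 : Q *ᵥ (Y *ᵥ w + w) = Y *ᵥ w - w := by
    have := congrArg (· *ᵥ w) hQY
    simpa [← Matrix.mulVec_mulVec, Matrix.add_mulVec, Matrix.sub_mulVec] using this
  have h2 := h (Y *ᵥ w + w)
  rwa [h1] at h2

end Stability

section Convergence

variable {N : ℕ}

/-- Along the normalised iteration the Cayley contraction constants decay geometrically. -/
theorem exists_isCayleyContraction_geometric {E : Matrix (Fin N) (Fin N) ℝ}
    {Y : ℕ → Matrix (Fin N) (Fin N) ℝ} {t : ℕ → ℝ} {B : LinearMap.BilinForm ℝ (Fin N → ℝ)} {r : ℝ}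
    (hY : ∀ k, IsUnit (Y k)) (ht0 : ∀ k, 0 < t k)
    (ht : ∀ k, t k = frobNorm (E * (Y k)⁻¹) / frobNorm (E * Y k))
    (hrec : ∀ k, (t k + 1) • Y (k + 1) = t k • Y k + (Y k)⁻¹)
    (hsymm : ∀ v w, B v w = B w v) (hB : ∀ v, v ⬝ᵥ v ≤ B v v) (hr0 : 0 ≤ r) (hr1 : r < 1)
    (h0 : IsCayleyContraction B r (Y 0).mulVecLin) :
    ∃ q, 0 ≤ q ∧ q < 1 ∧ ∀ k, IsCayleyContraction B (q ^ k * r) (Y k).mulVecLin := by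
  have hB0 (v) : 0 ≤ B v v :=
    (Finset.sum_nonneg fun _ _ => mul_self_nonneg _ : 0 ≤ v ⬝ᵥ v).trans (hB v)
  set M := (2 * (1 + r) / (1 - r)) ^ 2 * ∑ j, B (Pi.single j 1) (Pi.single j 1)
  set C := max 1 M
  have hC1 : 1 ≤ C := le_max_left _ _
  have hr1' : 0 < 1 - r := by linarith
  have hδ0 : 0 < (1 - r) / ((1 + r) * C ^ 3) := by positivity
  have hδ1 : (1 - r) / ((1 + r) * C ^ 3) ≤ 1 := by
    rw [div_le_one (by positivity)]
    nlinarith [one_le_pow₀ hC1 (n := 3)]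
  refine ⟨1 - (1 - r) / ((1 + r) * C ^ 3), by linarith, by linarith, fun k => ?_⟩
  set q := 1 - (1 - r) / ((1 + r) * C ^ 3) with hq
  have hq0 : 0 ≤ q := by linarith
  have hq1 : q ≤ 1 := by linarith
  induction k with
  | zero => simpa using h0
  | succ k ih =>
    have hr := ih.mono hB0 (mul_le_of_le_one_left hr0 (pow_le_one₀ hq0 hq1))
    have hdet := (Matrix.isUnit_iff_isUnit_det _).mp (hY k)
    have hYZ := Matrix.mul_nonsing_inv _ hdet
    have hZY := Matrix.nonsing_inv_mul _ hdet
    have hYM : frobNorm (Y k) ^ 2 ≤ C :=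
      (frobNorm_sq_le_of_forall hB fun w => hr.apply_le hB0 hsymm hr1 w).trans (le_max_right _ _)
    have hZM : frobNorm (Y k)⁻¹ ^ 2 ≤ C := by
      refine (frobNorm_sq_le_of_forall hB fun w => ?_).trans (le_max_right _ _)
      have := hr.le_apply hB0 hsymm hr1 ((Y k)⁻¹ *ᵥ w)
      rwa [Matrix.mulVecLin_apply, Matrix.mulVec_mulVec, hYZ, Matrix.one_mulVec] at this
    have htC : t k ≤ C := by
      rw [ht]
      exact (frobNorm_mul_div_le E hYZ).trans hZM
    have hCt : C⁻¹ ≤ t k := by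
      rw [inv_le_comm₀ (by positivity) (ht0 k), ht, inv_div]
      exact (frobNorm_mul_div_le E hZY).trans hYM
    rw [pow_succ', mul_assoc]
    refine ih.newton_step (g := (Y k)⁻¹.mulVecLin) hq0
      (hr.smul hB0 hsymm hr0 hr1 hC1 hCt htC) (ht0 k) (fun w => ?_) fun w => ?_
    · simp [Matrix.mulVec_mulVec, hYZ]
    · have := congrArg (· *ᵥ w) (hrec k)
      simpa [Matrix.add_mulVec, Matrix.smul_mulVec] using this

theorem tendsto_one_of_isCayleyContraction {Y : ℕ → Matrix (Fin N) (Fin N) ℝ}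
    {B : LinearMap.BilinForm ℝ (Fin N → ℝ)} {r : ℕ → ℝ}
    (hsymm : ∀ v w, B v w = B w v) (hB : ∀ v, v ⬝ᵥ v ≤ B v v)
    (hr : Tendsto r atTop (nhds 0)) (h : ∀ k, IsCayleyContraction B (r k) (Y k).mulVecLin) :
    Tendsto Y atTop (nhds 1) := by
  have hB0 (v) : 0 ≤ B v v :=
    (Finset.sum_nonneg fun _ _ => mul_self_nonneg _ : 0 ≤ v ⬝ᵥ v).trans (hB v)
  set S := ∑ j, B (Pi.single j 1) (Pi.single j 1)
  have hbound : ∀ᶠ k in atTop, frobNorm (Y k - 1) ^ 2 ≤ |r k| * 74 * S := by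
    filter_upwards [hr.eventually_lt_const (show (0 : ℝ) < 1 / 2 by norm_num)] with k hk
    refine frobNorm_sq_le_of_forall hB fun w => ?_
    have h1 := h k w
    have h2 := ((h k).mono hB0 hk.le).apply_le hB0 hsymm (by norm_num) w
    have h3 := hB0 ((Y k).mulVecLin w - w)
    norm_num at h2
    have h4 : B ((Y k).mulVecLin w + w) ((Y k).mulVecLin w + w) ≤ 74 * B w w := by
      simp only [map_add, map_sub, LinearMap.add_apply, LinearMap.sub_apply,
        Matrix.mulVecLin_apply, hsymm w (Y k *ᵥ w)] at h2 h3 ⊢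
      linarith
    rw [Matrix.sub_mulVec, Matrix.one_mulVec]
    calc _ ≤ _ := h1
      _ ≤ |r k| * (74 * B w w) :=
        mul_le_mul (le_abs_self _) h4 (hB0 _) (abs_nonneg _)
      _ = _ := by ring
  have hlim : Tendsto (fun k => frobNorm (Y k - 1) ^ 2) atTop (nhds 0) := by
    have h1 : Tendsto (fun k => |r k| * 74 * S) atTop (nhds 0) := by
      simpa using ((hr.abs.mul_const 74).mul_const S)
    exact squeeze_zero' (Eventually.of_forall fun _ => sq_nonneg _) hbound h1
  refine tendsto_pi_nhds.mpr fun i => tendsto_pi_nhds.mpr fun j => ?_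
  rw [tendsto_iff_norm_sub_tendsto_zero]
  have hsqrt : Tendsto (fun k => √(frobNorm (Y k - 1) ^ 2)) atTop (nhds 0) := by
    simpa using hlim.sqrt
  refine squeeze_zero (fun _ => norm_nonneg _) (fun k => Real.abs_le_sqrt ?_) hsqrt
  rw [frobNorm_sq]
  refine le_trans ?_ (Finset.single_le_sum (f := fun i => ∑ j, (Y k - 1) i j ^ 2)
    (fun _ _ => by positivity) (Finset.mem_univ i))
  exact Finset.single_le_sum (f := fun j => (Y k - 1) i j ^ 2)
    (fun _ _ => by positivity) (Finset.mem_univ j)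

theorem tendsto_one_of_scaled_newton {E : Matrix (Fin N) (Fin N) ℝ} (hE : E ≠ 0)
    {X : ℕ → Matrix (Fin N) (Fin N) ℝ} {c : ℕ → ℝ} (hX : ∀ k, IsUnit (X k)) (hc0 : ∀ k, 0 < c k)
    (hc : ∀ k, c k = √(frobNorm (E * X k) / frobNorm (E * (X k)⁻¹)))
    (hrec : ∀ k, X (k + 1) = (1 / (2 * c k)) • X k + (c k / 2) • (X k)⁻¹)
    {B : LinearMap.BilinForm ℝ (Fin N → ℝ)} {r : ℝ}
    (hsymm : ∀ v w, B v w = B w v) (hB : ∀ v, v ⬝ᵥ v ≤ B v v) (hr0 : 0 ≤ r) (hr1 : r < 1)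
    (h0 : IsCayleyContraction B r (X 0).mulVecLin) :
    Tendsto X atTop (nhds 1) := by
  obtain ⟨s, hs0, hs⟩ : ∃ s : ℕ → ℝ, s 0 = 1 ∧ ∀ k, s (k + 1) = (s k / c k + (s k / c k)⁻¹) / 2 :=
    ⟨Nat.rec 1 fun k x => (x / c k + (x / c k)⁻¹) / 2, rfl, fun _ => rfl⟩
  have hspos (k) : 0 < s k := by
    induction k with
    | zero => simp [hs0]
    | succ k ih =>
      rw [hs]
      have := hc0 k
      positivity
  set Y : ℕ → Matrix (Fin N) (Fin N) ℝ := fun k => (s k)⁻¹ • X k with hYdef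
  have hYinv (k) : (Y k)⁻¹ = s k • (X k)⁻¹ := by
    refine Matrix.inv_eq_right_inv ?_
    rw [hYdef, Matrix.smul_mul, Matrix.mul_smul, smul_smul, inv_mul_cancel₀ (hspos k).ne', one_smul,
      Matrix.mul_nonsing_inv _ ((Matrix.isUnit_iff_isUnit_det _).mp (hX k))]
  have hXY (k) : X k = s k • Y k := by
    rw [hYdef, smul_smul, mul_inv_cancel₀ (hspos k).ne', one_smul]
  have hY (k) : IsUnit (Y k) :=
    (hX k).smul (Units.mk0 (s k)⁻¹ (inv_pos.mpr (hspos k)).ne')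
  set t : ℕ → ℝ := fun k => (s k / c k) ^ 2 with htdef
  have ht0 (k) : 0 < t k := pow_pos (div_pos (hspos k) (hc0 k)) 2
  have ht (k) : t k = frobNorm (E * (Y k)⁻¹) / frobNorm (E * Y k) := by
    have h1 := hspos k
    rw [hYinv, hYdef, Matrix.mul_smul, Matrix.mul_smul, frobNorm_smul, frobNorm_smul,
      abs_of_pos h1, abs_of_pos (inv_pos.mpr h1)]
    simp only [htdef]
    rw [div_pow, hc k, Real.sq_sqrt (div_nonneg (frobNorm_nonneg _) (frobNorm_nonneg _))]
    field_simp
  have hYrec (k) : (t k + 1) • Y (k + 1) = t k • Y k + (Y k)⁻¹ := by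
    have h1 := hspos k
    have h2 := hc0 k
    rw [hYinv]
    simp only [hYdef, htdef, hrec, hs, smul_add, smul_smul]
    congr 2 <;> field_simp
  obtain ⟨q, hq0, hq1, hq⟩ := exists_isCayleyContraction_geometric hY ht0 ht hYrec hsymm hB hr0 hr1
    (by simpa [hYdef, hs0] using h0)
  have hYlim : Tendsto Y atTop (nhds 1) := by
    refine tendsto_one_of_isCayleyContraction hsymm hB ?_ hq
    simpa using (tendsto_pow_atTop_nhds_zero_of_lt_one hq0 hq1).mul_const r
  have hYinvlim : Tendsto (fun k => (Y k)⁻¹) atTop (nhds 1) := by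
    have h1 : ContinuousAt (Inv.inv : Matrix (Fin N) (Fin N) ℝ → _) 1 := by
      refine continuousAt_matrix_inv 1 ?_
      rw [Matrix.det_one, Ring.inverse_eq_inv']
      exact continuousAt_inv₀ one_ne_zero
    have h2 := h1.tendsto.comp hYlim
    rwa [inv_one] at h2
  have hfrob {Z : ℕ → Matrix (Fin N) (Fin N) ℝ} (hZ : Tendsto Z atTop (nhds 1)) :
      Tendsto (fun k => frobNorm (E * Z k)) atTop (nhds (frobNorm E)) := by
    have h1 : Continuous fun Z : Matrix (Fin N) (Fin N) ℝ => frobNorm (E * Z) :=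
      continuous_frobNorm.comp (continuous_const.matrix_mul continuous_id)
    have h2 := (h1.tendsto 1).comp hZ
    rwa [Matrix.mul_one] at h2
  have htlim : Tendsto t atTop (nhds 1) := by
    have h1 := (hfrob hYinvlim).div (hfrob hYlim) (frobNorm_pos hE).ne'
    rw [div_self (frobNorm_pos hE).ne'] at h1
    exact h1.congr fun k => (ht k).symm
  have hσ : Tendsto (fun k => s k / c k) atTop (nhds 1) := by
    have h1 := htlim.sqrt
    rw [Real.sqrt_one] at h1
    exact h1.congr fun k => Real.sqrt_sq (div_pos (hspos k) (hc0 k)).le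
  have hslim : Tendsto s atTop (nhds 1) := by
    refine (tendsto_add_atTop_iff_nat 1).mp ?_
    have h1 := (hσ.add (hσ.inv₀ one_ne_zero)).div_const 2
    rw [inv_one, one_add_one_eq_two, div_self two_ne_zero] at h1
    exact h1.congr fun k => (hs k).symm
  have h1 := hslim.smul hYlim
  rw [one_smul] at h1
  exact h1.congr fun k => (hXY k).symm

end Convergence

/-- The scaled Newton sign-function iteration `A₁ = 𝒜`,
`c_k = (‖A_k‖_F / ‖ℰ A_k⁻¹ ℰ‖_F)^{1/2}`,
`A_{k+1} = (1/(2c_k)) A_k + (c_k/2) ℰ A_k⁻¹ ℰ` applied to a c-stable pencil `λℰ − 𝒜`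
with invertible `ℰ` is well defined (every iterate is invertible with `λℰ − A_k`
c-stable) and converges to `−ℰ`. -/
theorem sign_function_iteration_converges {N : ℕ}
    (ℰ 𝒜 : Matrix (Fin N) (Fin N) ℝ)
    (hE : IsUnit ℰ) (hstab : CStablePencil ℰ 𝒜)
    (A : ℕ → Matrix (Fin N) (Fin N) ℝ) (c : ℕ → ℝ)
    (hA1 : A 1 = 𝒜)
    (hc : ∀ k, 1 ≤ k → c k = Real.sqrt (frobNorm (A k) / frobNorm (ℰ * (A k)⁻¹ * ℰ)))
    (hrec : ∀ k, 1 ≤ k →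
      A (k + 1) = (1 / (2 * c k)) • A k + (c k / 2) • (ℰ * (A k)⁻¹ * ℰ)) :
    (∀ k, 1 ≤ k → IsUnit (A k) ∧ CStablePencil ℰ (A k)) ∧
    Tendsto A atTop (nhds (-ℰ)) := by
  rcases Nat.eq_zero_or_pos N with rfl | hN
  · refine ⟨fun k _ => ⟨isUnit_of_subsingleton _, fun μ hμ => by simp at hμ⟩, ?_⟩
    rw [Subsingleton.elim A fun _ => -ℰ]
    exact tendsto_const_nhds
  have : NeZero N := ⟨hN.ne'⟩
  have hcpos (k) (hk : 1 ≤ k) (hA : IsUnit (A k)) : 0 < c k := by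
    have hinv : IsUnit (A k)⁻¹ := by simpa using hA
    rw [hc k hk]
    exact Real.sqrt_pos.mpr (div_pos (frobNorm_pos hA.ne_zero)
      (frobNorm_pos ((hE.mul hinv).mul hE).ne_zero))
  have hstable (k) (hk : 1 ≤ k) : CStablePencil ℰ (A k) := by
    induction k, hk using Nat.le_induction with
    | base => rwa [hA1]
    | succ k hk ih =>
      rw [hrec k hk]
      exact ih.newton_step (hcpos k hk ih.isUnit)
  refine ⟨fun k hk => ⟨(hstable k hk).isUnit, hstable k hk⟩, ?_⟩
  have hEdet := (Matrix.isUnit_iff_isUnit_det _).mp hE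
  have hEE := Matrix.mul_nonsing_inv _ hEdet
  have hEE' := Matrix.nonsing_inv_mul _ hEdet
  set X : ℕ → Matrix (Fin N) (Fin N) ℝ := fun k => -(ℰ⁻¹ * A (k + 1)) with hXdef
  have hAu (k) : IsUnit (A (k + 1)) := (hstable _ (by omega)).isUnit
  have hX (k) : IsUnit (X k) := (IsUnit.mul (by simpa using hE) (hAu k)).neg
  have hEX (k) : ℰ * X k = -A (k + 1) := by
    rw [hXdef, Matrix.mul_neg, ← Matrix.mul_assoc, hEE, Matrix.one_mul]
  have hXinv (k) : (X k)⁻¹ = -((A (k + 1))⁻¹ * ℰ) := by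
    refine Matrix.inv_eq_right_inv ?_
    rw [hXdef, neg_mul_neg, Matrix.mul_assoc, ← Matrix.mul_assoc (A (k + 1)),
      Matrix.mul_nonsing_inv _ ((Matrix.isUnit_iff_isUnit_det _).mp (hAu k)), Matrix.one_mul, hEE']
  have hXrec (k) : X (k + 1) = (1 / (2 * c (k + 1))) • X k + (c (k + 1) / 2) • (X k)⁻¹ := by
    rw [hXinv]
    simp only [hXdef]
    rw [hrec (k + 1) (by omega), Matrix.mul_add, Matrix.mul_smul, Matrix.mul_smul,
      Matrix.mul_assoc ℰ, ← Matrix.mul_assoc ℰ⁻¹ ℰ, hEE', Matrix.one_mul]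
    module
  have hXc (k) : c (k + 1) = √(frobNorm (ℰ * X k) / frobNorm (ℰ * (X k)⁻¹)) := by
    rw [hc (k + 1) (by omega), hEX, hXinv, Matrix.mul_neg, frobNorm_neg, frobNorm_neg,
      Matrix.mul_assoc]
  obtain ⟨B, r, hsymm, hB, hr0, hr1, h0⟩ := exists_isCayleyContraction (Y := X 0) fun z hz => by
    have h1 : (ℰ.map Complex.ofReal) * (X 0).map Complex.ofReal = -𝒜.map Complex.ofReal := by
      have h := hEX 0
      rw [zero_add, hA1] at h
      exact (map_mul Complex.ofRealHom.mapMatrix ℰ (X 0)).symm.trans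
        ((congrArg Complex.ofRealHom.mapMatrix h).trans (map_neg _ _))
    have h2 : -z • ℰ.map Complex.ofReal - 𝒜.map Complex.ofReal
        = -(ℰ.map Complex.ofReal * (z • 1 - (X 0).map Complex.ofReal)) := by
      rw [Matrix.mul_sub, h1, Matrix.mul_smul, Matrix.mul_one]
      module
    have h3 := hstab (-z) (by rw [h2, Matrix.det_neg, Matrix.det_mul, hz, mul_zero, mul_zero])
    simpa using h3
  have hlim := tendsto_one_of_scaled_newton hE.ne_zero hX
    (fun k => hcpos (k + 1) (by omega) (hAu k)) hXc hXrec hsymm hB hr0 hr1 h0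
  refine (tendsto_add_atTop_iff_nat 1).mp ?_
  have hcont : Continuous fun Z : Matrix (Fin N) (Fin N) ℝ => -(ℰ * Z) :=
    (continuous_const.matrix_mul continuous_id).neg
  have h1 := (hcont.tendsto 1).comp hlim
  rw [Matrix.mul_one] at h1
  exact h1.congr fun k => by simp [hEX]
end
end
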